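/- arXiv:1402.0067 — 7 statements merged into one kernel-verified Lean document; each statement's English description precedes it below -/
import Mathlib

section
/- Let κ be an infinite cardinal and let G=(V,E) be a graph in which every vertex has infinite degree. Suppose that every induced subgraph H=(W,F) of G with |W| ≤ κ has an unfriendly partition whenever each element of W has at least κ neighbours in W, or strictly more neighbours in W than in V−W. Then G has a κ-unfriendly partition. -/
open Cardinal

universe u

/-- `π` is an unfriendly partition of `G`: for each vertex `x`, the number of neighbours of `x`
in the opposite class is at least the number of neighbours in the same class. -/
def UnfriendlyPartition {V : Type u} (G : SimpleGraph V) (π : V → Fin 2) : Prop :=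
  ∀ x : V, #{y : V // G.Adj x y ∧ π y = π x} ≤ #{y : V // G.Adj x y ∧ π y ≠ π x}

/-- `π` is a `κ`-unfriendly partition of `G`: for each vertex `x`, the number of neighbours of `x`
in the opposite class is `≥ κ`, or at least the number of neighbours in the same class. -/
def KUnfriendlyPartition {V : Type u} (G : SimpleGraph V) (κ : Cardinal.{u}) (π : V → Fin 2) :
    Prop :=
  ∀ x : V, κ ≤ #{y : V // G.Adj x y ∧ π y ≠ π x} ∨
    #{y : V // G.Adj x y ∧ π y = π x} ≤ #{y : V // G.Adj x y ∧ π y ≠ π x}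

/-!
Take a maximal partial partition in which every coloured vertex `x` already has `min κ (deg x)`
neighbours of the opposite colour. By maximality a vertex outside its domain `D` has fewer than
`min κ (deg x)` neighbours in `D`, since otherwise one of the two colours would be available for it.
So if `D` were not all of `V`, any vertex outside `D` would lie in a set `W` of cardinality at most
`κ`, disjoint from `D`, to which the hypothesis applies: close up under adding all the neighbours
outside `D`, or `κ` of them when there are more. An unfriendly partition of `W` then extends the
maximal partial partition, because the degrees are infinite.
-/

section Cardinal

variable {α : Type u} {c κ : Cardinal.{u}} {s t r : Set α}

theorem le_mk_or_le_mk_of_subset_union (hc : ℵ₀ ≤ c) (hcs : c ≤ #s) (hs : s ⊆ t ∪ r) :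
    c ≤ #t ∨ c ≤ #r := by
  by_contra! h
  exact (hcs.trans ((mk_le_mk_of_subset hs).trans (mk_union_le t r))).not_gt
    (add_lt_of_lt hc h.1 h.2)

theorem mk_le_mk_inter_of_mk_inter_compl_le (hs : s.Infinite) (h : #↥(s ∩ tᶜ) ≤ #↥(s ∩ t)) :
    #s ≤ #↥(s ∩ t) :=
  (le_mk_or_le_mk_of_subset_union (infinite_iff.1 hs.to_subtype) le_rfl
    (Set.inter_union_compl s t).superset).elim id h.trans'

theorem exists_subset_mk_le_and_le_mk_or_eq (κ : Cardinal.{u}) (s : Set α) :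
    ∃ t ⊆ s, #t ≤ κ ∧ (κ ≤ #t ∨ t = s) := by
  rcases le_total #s κ with h | h
  · exact ⟨s, subset_rfl, h, .inr rfl⟩
  · obtain ⟨t, hts, ht⟩ := le_mk_iff_exists_subset.1 h
    exact ⟨t, hts, ht.le, .inl ht.ge⟩

theorem mk_iterate_biUnion_le (hκ : ℵ₀ ≤ κ) {f : α → Set α} (hf : ∀ x, #(f x) ≤ κ)
    (hs : #s ≤ κ) (n : ℕ) : #↥((fun t ↦ ⋃ x ∈ t, f x)^[n] s) ≤ κ := by
  induction n with
  | zero => exact hs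
  | succ n ih =>
    rw [Function.iterate_succ_apply']
    calc _ ≤ _ := mk_biUnion_le _ _
      _ ≤ κ * κ := mul_le_mul' ih (ciSup_le' fun x ↦ hf x)
      _ = κ := mul_eq_self hκ

theorem mk_setOf_reflTransGen_le (hκ : ℵ₀ ≤ κ) {R : α → α → Prop} (hR : ∀ x, #{y | R x y} ≤ κ)
    (x : α) : #{y | Relation.ReflTransGen R x y} ≤ κ := by
  let A (n : ℕ) : Set α := (fun t ↦ ⋃ y ∈ t, {z | R y z})^[n] {x}
  have hA (n : ℕ) : #(A n) ≤ κ :=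
    mk_iterate_biUnion_le hκ hR ((mk_singleton x).trans_le (one_le_aleph0.trans hκ)) n
  have hsub : {y | Relation.ReflTransGen R x y} ⊆ ⋃ n, A n := by
    intro y hy
    induction hy with
    | refl => exact Set.mem_iUnion.2 ⟨0, rfl⟩
    | tail _ hyz ih =>
      obtain ⟨n, hn⟩ := Set.mem_iUnion.1 ih
      refine Set.mem_iUnion.2 ⟨n + 1, ?_⟩
      simp only [A, Function.iterate_succ_apply']
      exact Set.mem_biUnion hn hyz
  calc _ ≤ #(⋃ n, A n) := mk_le_mk_of_subset hsub
    _ ≤ ℵ₀ * ⨆ n, #(A n) := by simpa using mk_iUnion_le_lift A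
    _ ≤ κ * κ := mul_le_mul' hκ (ciSup_le' hA)
    _ = κ := mul_eq_self hκ

end Cardinal

section InternallyRich

variable {V : Type u} {G : SimpleGraph V} {κ : Cardinal.{u}} {D W : Set V}

/-- A set `W` of vertices is internally `κ`-rich if each of its elements has at least `κ` neighbours
in `W`, or strictly more neighbours in `W` than outside: these are the sets whose induced subgraphs
are assumed to have unfriendly partitions. -/
def IsInternallyRich (G : SimpleGraph V) (κ : Cardinal.{u}) (W : Set V) : Prop :=
  ∀ x ∈ W, κ ≤ #↥(G.neighborSet x ∩ W) ∨ #↥(G.neighborSet x ∩ Wᶜ) < #↥(G.neighborSet x ∩ W)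

theorem IsInternallyRich.min_le_mk_neighborSet_inter (hW : IsInternallyRich G κ W) {x : V}
    (hx : x ∈ W) (hdeg : (G.neighborSet x).Infinite) :
    min κ #(G.neighborSet x) ≤ #↥(G.neighborSet x ∩ W) :=
  min_le_iff.2 <| (hW x hx).imp id fun h ↦ mk_le_mk_inter_of_mk_inter_compl_le hdeg h.le

theorem exists_isInternallyRich_mk_le (hκ : ℵ₀ ≤ κ)
    (hD : ∀ x ∉ D, #↥(G.neighborSet x ∩ D) < #↥(G.neighborSet x ∩ Dᶜ)) {x₀ : V} (hx₀ : x₀ ∉ D) :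
    ∃ W, x₀ ∈ W ∧ Disjoint D W ∧ #W ≤ κ ∧ IsInternallyRich G κ W := by
  choose F hFsub hFκ hF using
    fun x ↦ exists_subset_mk_le_and_le_mk_or_eq κ (G.neighborSet x ∩ Dᶜ)
  let W : Set V := {y | Relation.ReflTransGen (fun x y ↦ y ∈ F x) x₀ y}
  have hWD : W ⊆ Dᶜ := by
    intro y hy
    induction hy with
    | refl => exact hx₀
    | tail _ hyz _ => exact (hFsub _ hyz).2
  have hFW {x : V} (hx : x ∈ W) : F x ⊆ W := fun _ hy ↦ Relation.ReflTransGen.tail hx hy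
  have hFle {x : V} (hx : x ∈ W) : #(F x) ≤ #↥(G.neighborSet x ∩ W) :=
    mk_le_mk_of_subset fun _ hy ↦ ⟨(hFsub x hy).1, hFW hx hy⟩
  refine ⟨W, .refl, Set.disjoint_left.2 fun _ hyD hyW ↦ hWD hyW hyD,
    mk_setOf_reflTransGen_le hκ hFκ x₀,
    fun x hx ↦ (hF x).imp (fun h ↦ h.trans (hFle hx)) fun h ↦ ?_⟩
  have hout : G.neighborSet x ∩ Wᶜ ⊆ G.neighborSet x ∩ D := fun y hy ↦
    ⟨hy.1, by_contra fun hyD ↦ hy.2 (hFW hx (h ▸ ⟨hy.1, hyD⟩))⟩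
  calc #↥(G.neighborSet x ∩ Wᶜ) ≤ #↥(G.neighborSet x ∩ D) := mk_le_mk_of_subset hout
    _ < #↥(G.neighborSet x ∩ Dᶜ) := hD x (hWD hx)
    _ = #(F x) := by rw [h]
    _ ≤ #↥(G.neighborSet x ∩ W) := hFle hx

end InternallyRich

section Partition

variable {V : Type u} {G : SimpleGraph V} {κ : Cardinal.{u}}

theorem UnfriendlyPartition.mk_neighborSet_le {π : V → Fin 2} (hπ : UnfriendlyPartition G π) {x : V}
    (hx : (G.neighborSet x).Infinite) :
    #(G.neighborSet x) ≤ #{y : V // G.Adj x y ∧ π y ≠ π x} := by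
  refine mk_le_mk_inter_of_mk_inter_compl_le (t := {y | π y ≠ π x}) hx ?_
  have hcompl : {y | π y ≠ π x}ᶜ = {y | π y = π x} := Set.ext fun _ ↦ not_not
  rw [hcompl]
  exact hπ x

theorem UnfriendlyPartition.mk_neighborSet_inter_le {W : Set V} {π : W → Fin 2}
    (hπ : UnfriendlyPartition (G.induce W) π) {x : W} (hx : (G.neighborSet x ∩ W).Infinite) :
    #↥(G.neighborSet x ∩ W) ≤ #{y : W // G.Adj x y ∧ π y ≠ π x} := by
  have himage : Subtype.val '' (G.induce W).neighborSet x = G.neighborSet x ∩ W := by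
    rw [SimpleGraph.neighborSet_induce, Subtype.image_preimage_coe, Set.inter_comm]
  rw [← himage] at hx ⊢
  rw [mk_image_eq Subtype.val_injective]
  exact hπ.mk_neighborSet_le hx.of_image

theorem kUnfriendlyPartition_of_min_le_mk {π : V → Fin 2}
    (h : ∀ x, min κ #(G.neighborSet x) ≤ #{y : V // G.Adj x y ∧ π y ≠ π x}) :
    KUnfriendlyPartition G κ π := fun x ↦
  (min_le_iff.1 (h x)).imp id fun hx ↦ (mk_subtype_mono fun _ hy ↦ hy.1).trans hx

end Partition

section Saturated

variable {V : Type u} {G : SimpleGraph V} {m : V → Cardinal.{u}} {S T : Set (V × Fin 2)}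

/-- The neighbours of the vertex `p.1` to which the partial partition `S`, encoded as a set of pairs
(vertex, colour), gives a colour other than `p.2`. -/
def oppositeNeighborSet (G : SimpleGraph V) (S : Set (V × Fin 2)) (p : V × Fin 2) : Set V :=
  {y | G.Adj p.1 y ∧ ∃ c ≠ p.2, (y, c) ∈ S}

theorem oppositeNeighborSet_mono (h : S ⊆ T) (p : V × Fin 2) :
    oppositeNeighborSet G S p ⊆ oppositeNeighborSet G T p :=
  fun _ ⟨hadj, c, hc, hS⟩ ↦ ⟨hadj, c, hc, h hS⟩

/-- A partial partition `S`, encoded as a set of pairs (vertex, colour) with at most one colour per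
vertex, is `m`-saturated if each coloured vertex `x` already has at least `m x` neighbours of the
opposite colour, a property which no extension of `S` can destroy. -/
structure IsSaturated (G : SimpleGraph V) (m : V → Cardinal.{u}) (S : Set (V × Fin 2)) : Prop where
  injOn : S.InjOn Prod.fst
  le_mk : ∀ p ∈ S, m p.1 ≤ #(oppositeNeighborSet G S p)

theorem IsSaturated.sUnion {C : Set (Set (V × Fin 2))} (hC : IsChain (· ⊆ ·) C)
    (hsat : ∀ S ∈ C, IsSaturated G m S) : IsSaturated G m (⋃₀ C) where
  injOn := by
    rintro p ⟨S, hS, hp⟩ q ⟨T, hT, hq⟩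
    obtain ⟨U, hU, hSU, hTU⟩ := hC.directedOn S hS T hT
    exact (hsat U hU).injOn (hSU hp) (hTU hq)
  le_mk := fun p ⟨S, hS, hp⟩ ↦ ((hsat S hS).le_mk p hp).trans <|
    mk_le_mk_of_subset (oppositeNeighborSet_mono (Set.subset_sUnion_of_mem hS) p)

theorem exists_maximal_isSaturated (G : SimpleGraph V) (m : V → Cardinal.{u}) :
    ∃ S, Maximal (IsSaturated G m) S :=
  zorn_subset {S | IsSaturated G m S} fun C hsat hC ↦
    ⟨⋃₀ C, .sUnion hC hsat, fun _ ↦ Set.subset_sUnion_of_mem⟩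

theorem IsSaturated.union (hS : IsSaturated G m S) (hT : T.InjOn Prod.fst)
    (hST : Disjoint (Prod.fst '' S) (Prod.fst '' T))
    (hle : ∀ p ∈ T, m p.1 ≤ #(oppositeNeighborSet G (S ∪ T) p)) : IsSaturated G m (S ∪ T) where
  injOn := (Set.injOn_union hST.of_image).2 ⟨hS.injOn, hT, fun _ hp _ hq ↦
    hST.ne_of_mem (Set.mem_image_of_mem _ hp) (Set.mem_image_of_mem _ hq)⟩
  le_mk := fun p hp ↦ hp.elim (fun hpS ↦ (hS.le_mk p hpS).trans <|
    mk_le_mk_of_subset (oppositeNeighborSet_mono Set.subset_union_left p)) (hle p)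

theorem eq_empty_of_maximal_isSaturated (hS : Maximal (IsSaturated G m) S) (hT : T.InjOn Prod.fst)
    (hST : Disjoint (Prod.fst '' S) (Prod.fst '' T))
    (hle : ∀ p ∈ T, m p.1 ≤ #(oppositeNeighborSet G (S ∪ T) p)) : T = ∅ := by
  have hTS : T ⊆ S :=
    Set.subset_union_right.trans (hS.le_of_ge (hS.prop.union hT hST hle) Set.subset_union_left)
  exact hST.of_image.eq_bot_of_ge hTS

theorem mk_neighborSet_inter_lt_of_maximal_isSaturated (hS : Maximal (IsSaturated G m) S) {x : V}
    (hx : x ∉ Prod.fst '' S) (hm : ℵ₀ ≤ m x) : #↥(G.neighborSet x ∩ Prod.fst '' S) < m x := by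
  by_contra! hle
  have hcover : G.neighborSet x ∩ Prod.fst '' S ⊆
      oppositeNeighborSet G S (x, 0) ∪ oppositeNeighborSet G S (x, 1) := by
    rintro _ ⟨hadj, ⟨y, c⟩, hyc, rfl⟩
    rcases eq_or_ne c 0 with rfl | hc
    · exact .inr ⟨hadj, 0, zero_ne_one, hyc⟩
    · exact .inl ⟨hadj, c, hc, hyc⟩
  obtain ⟨c, hc⟩ : ∃ c, m x ≤ #(oppositeNeighborSet G S (x, c)) :=
    (le_mk_or_le_mk_of_subset_union hm hle hcover).elim (⟨0, ·⟩) (⟨1, ·⟩)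
  refine Set.singleton_ne_empty (x, c) <|
    eq_empty_of_maximal_isSaturated hS (Set.injOn_singleton _ _) ?_ ?_
  · simpa only [Set.image_singleton, Set.disjoint_singleton_right] using hx
  · rintro _ rfl
    exact hc.trans (mk_le_mk_of_subset (oppositeNeighborSet_mono Set.subset_union_left _))

theorem eq_empty_of_maximal_isSaturated_of_unfriendlyPartition (hS : Maximal (IsSaturated G m) S)
    {W : Set V} (hSW : Disjoint (Prod.fst '' S) W)
    (hm : ∀ x ∈ W, ℵ₀ ≤ m x) (hW : ∀ x ∈ W, m x ≤ #↥(G.neighborSet x ∩ W)) {π : W → Fin 2}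
    (hπ : UnfriendlyPartition (G.induce W) π) : W = ∅ := by
  let T : Set (V × Fin 2) := Set.range fun w : W ↦ (w.1, π w)
  have hdom : Prod.fst '' T = W := by
    rw [← Set.range_comp]
    exact Subtype.range_val
  have hT : T = ∅ := by
    refine eq_empty_of_maximal_isSaturated hS
      (Function.Injective.injOn_range Subtype.val_injective) (hdom.symm ▸ hSW) ?_
    rintro _ ⟨x, rfl⟩
    have hinf : (G.neighborSet x ∩ W).Infinite :=
      Set.infinite_coe_iff.1 (infinite_iff.2 ((hm x x.2).trans (hW x x.2)))
    have hopp : Subtype.val '' {y : W | G.Adj x y ∧ π y ≠ π x} ⊆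
        oppositeNeighborSet G (S ∪ T) (x, π x) := by
      rintro _ ⟨y, ⟨hadj, hne⟩, rfl⟩
      exact ⟨hadj, π y, hne, .inr ⟨y, rfl⟩⟩
    calc m x ≤ #↥(G.neighborSet x ∩ W) := hW x x.2
      _ ≤ #{y : W // G.Adj x y ∧ π y ≠ π x} := hπ.mk_neighborSet_inter_le hinf
      _ = #(Subtype.val '' {y : W | G.Adj x y ∧ π y ≠ π x}) :=
        (mk_image_eq Subtype.val_injective).symm
      _ ≤ #(oppositeNeighborSet G (S ∪ T) (x, π x)) := mk_le_mk_of_subset hopp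
  rw [← hdom, hT, Set.image_empty]

theorem IsSaturated.exists_partition (hS : IsSaturated G m S) (hdom : Prod.fst '' S = Set.univ) :
    ∃ π : V → Fin 2, ∀ x, m x ≤ #{y : V // G.Adj x y ∧ π y ≠ π x} := by
  have hcolour (x : V) : ∃ c, (x, c) ∈ S := by
    obtain ⟨⟨_, c⟩, hc, rfl⟩ := hdom.symm ▸ Set.mem_univ x
    exact ⟨c, hc⟩
  choose π hπ using hcolour
  refine ⟨π, fun x ↦ (hS.le_mk _ (hπ x)).trans (mk_subtype_mono ?_)⟩
  rintro y ⟨hadj, c, hc, hyc⟩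
  have hπc : π y = c := congrArg Prod.snd (hS.injOn (hπ y) hyc rfl)
  exact ⟨hadj, hπc ▸ hc⟩

end Saturated

theorem stmt0 {V : Type u} (κ : Cardinal.{u}) (hκ : ℵ₀ ≤ κ) (G : SimpleGraph V)
    (hdeg : ∀ x : V, (G.neighborSet x).Infinite)
    (hyp : ∀ W : Set V, #W ≤ κ →
      (∀ x ∈ W, κ ≤ #↥(G.neighborSet x ∩ W) ∨
        #↥(G.neighborSet x ∩ Wᶜ) < #↥(G.neighborSet x ∩ W)) →
      ∃ π : W → Fin 2, UnfriendlyPartition (G.induce W) π) :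
    ∃ π : V → Fin 2, KUnfriendlyPartition G κ π := by
  let m : V → Cardinal.{u} := fun x ↦ min κ #(G.neighborSet x)
  have hm (x : V) : ℵ₀ ≤ m x := le_min hκ (infinite_iff.1 (hdeg x).to_subtype)
  obtain ⟨S, hS⟩ := exists_maximal_isSaturated G m
  obtain ⟨π, hπ⟩ := hS.prop.exists_partition <| by
    by_contra! hdom
    obtain ⟨x₀, hx₀⟩ := (Set.ne_univ_iff_exists_notMem _).1 hdom
    have hfew : ∀ x ∉ Prod.fst '' S, #↥(G.neighborSet x ∩ Prod.fst '' S) <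
        #↥(G.neighborSet x ∩ (Prod.fst '' S)ᶜ) := fun x hx ↦ by
      by_contra! hle
      exact (mk_le_mk_inter_of_mk_inter_compl_le (hdeg x) hle).not_gt
        ((mk_neighborSet_inter_lt_of_maximal_isSaturated hS hx (hm x)).trans_le (min_le_right _ _))
    obtain ⟨W, hx₀W, hSW, hWκ, hW⟩ := exists_isInternallyRich_mk_le hκ hfew hx₀
    obtain ⟨π, hπ⟩ := hyp W hWκ hW
    have hWempty : W = ∅ := eq_empty_of_maximal_isSaturated_of_unfriendlyPartition hS hSW
      (fun x _ ↦ hm x) (fun x hx ↦ hW.min_le_mk_neighborSet_inter hx (hdeg x)) hπ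
    exact Set.notMem_empty x₀ (hWempty ▸ hx₀W)
  exact ⟨π, kUnfriendlyPartition_of_min_le_mk hπ⟩
end

section
/- For each natural number n, every graph in which every vertex has infinite degree admits an ℵ_n-unfriendly partition. -/
/-!
Ask each vertex `v` to have at least `d v` neighbours of the other colour, where `d v` is infinite,
or zero, and at most the degree of `v`. By induction on `n`, demands below `ℵ_n` can be satisfied in
every graph. Let the demands be at most a regular cardinal `κ`, those below `κ` being satisfiable by
induction. A maximal partial colouring that satisfies the demands of the vertices it colours leaves
the demands on the remaining graph intact, so it suffices to find one nonempty partial colouring.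
Closing off, we may assume that there are at most `κ` vertices, and order them in type `κ`.

If for stationarily many stages `a` some vertex `y a ≥ a` has `d (y a)` neighbours below `a`, colour
greedily; on a stationary set the `y a` get the same colour and have `d (y a)` neighbours of the
other colour below `a`. The `y a` form one class, the vertices adjacent to stationarily many of them
the other. Otherwise a club cuts the vertices into blocks of size below `κ` such that each demand
below `κ` can be met inside a block. Satisfy these by induction, then exchange the colours on
suitable blocks so that each vertex of demand `κ` sees both colours `κ` times.
-/

open Cardinal

universe u

open Set

section Cardinality

theorem le_mk_or_le_mk_of_subset_union_s1 {α : Type u} {c : Cardinal.{u}} {s t₁ t₂ : Set α}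
    (hc : c = 0 ∨ ℵ₀ ≤ c) (hs : c ≤ #s) (hst : s ⊆ t₁ ∪ t₂) : c ≤ #t₁ ∨ c ≤ #t₂ := by
  rcases hc with rfl | hc
  · exact .inl zero_le
  by_contra! h
  exact (hs.trans (mk_le_mk_of_subset hst)).not_gt
    ((mk_union_le t₁ t₂).trans_lt (add_lt_of_lt hc h.1 h.2))

theorem subset_inter_preimage_union {α : Type u} (s : Set α) (f : α → Bool) (i : Bool) :
    s ⊆ (s ∩ f ⁻¹' {i}) ∪ (s ∩ f ⁻¹' {!i}) := by
  intro y hy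
  cases h : f y <;> cases i <;> simp [h, hy]

/-- Colour greedily along the order, giving `x` the colour that is rarer in `N x`. -/
theorem exists_forall_le_mk_inter_preimage_not {α : Type u} [Preorder α] [WellFoundedLT α]
    {N : α → Set α} (hN : ∀ x, N x ⊆ Iio x) :
    ∃ f : α → Bool, ∀ (x : α) (c : Cardinal.{u}), c = 0 ∨ ℵ₀ ≤ c → c ≤ #(N x) →
      c ≤ #↑(N x ∩ f ⁻¹' {!f x}) := by
  classical
  let rare (x : α) (g : ∀ y, y < x → Bool) : Bool :=
    decide (#{y // ∃ h : y ∈ N x, g y (hN x h) = true} ≤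
      #{y // ∃ h : y ∈ N x, g y (hN x h) = false})
  let f : α → Bool := wellFounded_lt.fix rare
  have hf (x : α) : f x = decide (#↑(N x ∩ f ⁻¹' {true}) ≤ #↑(N x ∩ f ⁻¹' {false})) := by
    rw [show f x = rare x fun y _ ↦ f y from wellFounded_lt.fix_eq rare x]
    simp only [rare, exists_prop]
    rfl
  refine ⟨f, fun x c hc hcN ↦ ?_⟩
  have hle : #↑(N x ∩ f ⁻¹' {f x}) ≤ #↑(N x ∩ f ⁻¹' {!f x}) := by
    cases h : f x <;> rw [hf x] at h
    · exact (not_le.1 (of_decide_eq_false h)).le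
    · exact of_decide_eq_true h
  exact (le_mk_or_le_mk_of_subset_union_s1 hc hcN
    (subset_inter_preimage_union (N x) f (f x))).elim (·.trans hle) id

theorem exists_injective_forall_mem {ι α : Type u} (s : ι → Set α) (hs : ∀ i, #ι ≤ #(s i)) :
    ∃ g : ι → α, g.Injective ∧ ∀ i, g i ∈ s i := by
  obtain ⟨_, _, hι⟩ := exists_ord_eq_type_lt ι
  have fresh (i : ι) (g : ∀ j, j < i → α) : (s i \ range fun j : Iio i ↦ g j j.2).Nonempty :=
    sdiff_nonempty_of_mk_lt_mk (mk_range_le.trans_lt ((mk_Iio_lt i hι).trans_le (hs i)))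
  let g : ι → α := wellFounded_lt.fix fun i g ↦ (fresh i g).choose
  have hg (i : ι) : g i ∈ s i \ range fun j : Iio i ↦ g j := by
    rw [show g i = (fresh i fun j _ ↦ g j).choose from wellFounded_lt.fix_eq _ i]
    exact (fresh i fun j _ ↦ g j).choose_spec
  have hg_ne {i j : ι} (hij : i < j) : g i ≠ g j := fun h ↦ (hg j).2 ⟨⟨i, hij⟩, h⟩
  refine ⟨g, fun i j h ↦ ?_, fun i ↦ (hg i).1⟩
  by_contra! hij
  exact hij.lt_or_gt.elim (hg_ne · h) (hg_ne · h.symm)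

/-- Each pair `(i, c)` reserves `κ` points of `N i` in distinct blocks, whose colours are then
set to `c`. -/
theorem exists_forall_le_mk_inter_preimage_xor {ι α β : Type u} {κ : Cardinal.{u}} (hκ : ℵ₀ ≤ κ)
    (hι : #ι ≤ κ) {N : ι → Set α} {b : α → β} (hN : ∀ i, κ ≤ #(b '' N i)) (f : α → Bool) :
    ∃ t : β → Bool, ∀ i c, κ ≤ #↑(N i ∩ (fun y ↦ f y ^^ t (b y)) ⁻¹' {c}) := by
  have hcard : #((ι × κ.out) × Bool) ≤ κ := by
    simpa using mul_le_of_le hκ (mul_le_of_le hκ hι le_rfl) (ofNat_le_aleph0.trans hκ)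
  obtain ⟨g, hg_inj, hg⟩ := exists_injective_forall_mem
    (fun j : (ι × κ.out) × Bool ↦ b '' N j.1.1) fun j ↦ hcard.trans (hN j.1.1)
  choose w hwN hw using hg
  refine ⟨Function.extend g (fun j ↦ f (w j) ^^ j.2) fun _ ↦ false, fun i c ↦ ?_⟩
  have hw_inj : (fun k : κ.out ↦ w ((i, k), c)).Injective := fun k k' h ↦ by
    have := hg_inj ((hw _).symm.trans ((congrArg b h).trans (hw _)))
    simpa using this
  calc
    κ = #(range fun k : κ.out ↦ w ((i, k), c)) := by rw [mk_range_eq _ hw_inj, mk_out]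
    _ ≤ _ := mk_le_mk_of_subset ?_
  rintro _ ⟨k, rfl⟩
  exact ⟨hwN ((i, k), c), by simp [hw, hg_inj.extend_apply]⟩

end Cardinality

open Order

section Club

variable {α : Type u} [LinearOrder α]

/-- The diagonal intersection of the sets `K b`: its elements above `b` lie in `K b`. -/
def diagInter (K : α → Set α) : Set α :=
  {a | ∀ b < a, a ∈ K b}

theorem isClub_Ici (b : α) : IsClub (Ici b) where
  dirSupClosed := (isUpperSet_Ici b).dirSupClosed
  isCofinal a := ⟨max a b, le_max_right a b, le_max_left a b⟩

variable [WellFoundedLT α]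

theorem exists_isLUB_of_bddAbove {s : Set α} (hs : BddAbove s) : ∃ a, IsLUB s a :=
  ⟨_, wellFounded_lt.min_mem (upperBounds s) hs, fun _ ↦ wellFounded_lt.min_le⟩

variable [IsRegularCardinalOrder α]

theorem exists_forall_lt_of_mk_lt {s : Set α} (hs : #s < #α) : ∃ a, ∀ b ∈ s, b < a :=
  not_isCofinal_iff.1 fun h ↦ hs.not_ge (cof_eq_cardinalMk (α := α) ▸ cof_le h)

theorem isClub_diagInter (hα : ℵ₀ < #α) {K : α → Set α} (hK : ∀ b, IsClub (K b)) :
    IsClub (diagInter K) where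
  dirSupClosed t ht _ _ a ha b hb := by
    obtain ⟨c, hct, hbc⟩ := (lt_isLUB_iff ha).1 hb
    exact (hK b).isLUB_mem (t := t ∩ Ici c) (fun x hx ↦ ht hx.1 b (hbc.trans_le hx.2))
      ⟨c, hct, self_mem_Ici⟩ (ha.inter_Ici_of_mem hct)
  isCofinal a₀ := by
    have hcof : ℵ₀ < cof α := by rwa [cof_eq_cardinalMk]
    have hK' (a : α) : IsClub (⋂ b : Iic a, K b) :=
      .iInter hcof.ne' (by simpa using mk_Iic_lt a ord_cardinalMk hα.le) fun b ↦ hK b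
    choose h hhK hh using fun a ↦ (hK' a).isCofinal a
    have hmono : Monotone fun n ↦ h^[n] a₀ :=
      monotone_nat_of_le_succ fun n ↦ by simpa only [Function.iterate_succ_apply'] using hh _
    obtain ⟨m, hm⟩ := exists_isLUB_of_bddAbove <| (exists_forall_lt_of_mk_lt
      ((mk_le_aleph0_iff.2 (countable_range fun n ↦ h^[n] a₀)).trans_lt hα)).imp
      fun _ ha b hb ↦ (ha b hb).le
    refine ⟨m, fun b hb ↦ ?_, hm.1 ⟨0, rfl⟩⟩
    obtain ⟨_, ⟨n, rfl⟩, hbn⟩ := (lt_isLUB_iff hm).1 hb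
    have hmem (k : ℕ) : h^[n + k + 1] a₀ ∈ K b := by
      rw [Function.iterate_succ_apply']
      exact mem_iInter.1 (hhK _) ⟨b, hbn.le.trans (hmono (Nat.le_add_right n k))⟩
    refine (hK b).isLUB_mem (range_subset_iff.2 hmem) (range_nonempty _) ⟨?_, fun u hu ↦ hm.2 ?_⟩
    · rintro _ ⟨k, rfl⟩
      exact hm.1 ⟨_, rfl⟩
    · rintro _ ⟨k, rfl⟩
      exact (hmono (by lia)).trans (hu ⟨k, rfl⟩)

end Club

section Demand

variable {V : Type u}

/-- A demand asks each vertex `v` to have at least `d v` neighbours of the other colour. It is zero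
or infinite, so that it survives splitting the neighbours in two, and at most the degree. -/
structure IsDemand (G : SimpleGraph V) (d : V → Cardinal.{u}) : Prop where
  eq_zero_or_aleph0_le (v : V) : d v = 0 ∨ ℵ₀ ≤ d v
  le_mk_neighborSet (v : V) : d v ≤ #(G.neighborSet v)

/-- The colouring `f` gives every vertex `v` at least `d v` neighbours of the other colour. -/
def SatisfiesDemand (G : SimpleGraph V) (d : V → Cardinal.{u}) (f : V → Bool) : Prop :=
  ∀ v, d v ≤ #↑(G.neighborSet v ∩ f ⁻¹' {!f v})

/-- A partial colouring, given by its two colour classes `p false` and `p true`, which satisfies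
the demands of all the vertices it colours. -/
structure PartiallySatisfiesDemand (G : SimpleGraph V) (d : V → Cardinal.{u})
    (p : Bool → Set V) : Prop where
  disjoint : Disjoint (p false) (p true)
  le_mk (i : Bool) : ∀ v ∈ p i, d v ≤ #↑(G.neighborSet v ∩ p !i)

/-- The induction hypothesis of the main argument: demands below `κ` can be satisfied in every
graph, of whatever size. -/
def DemandsSatisfiableBelow (κ : Cardinal.{u}) : Prop :=
  ∀ (V : Type u) (G : SimpleGraph V) (d : V → Cardinal.{u}), IsDemand G d → (∀ v, d v < κ) →
    ∃ f, SatisfiesDemand G d f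

variable {G : SimpleGraph V} {d : V → Cardinal.{u}} {κ : Cardinal.{u}}

theorem demandsSatisfiableBelow_aleph0 : DemandsSatisfiableBelow ℵ₀ := by
  refine fun V G d hd hlt ↦ ⟨fun _ ↦ true, fun v ↦ ?_⟩
  rw [(hd.eq_zero_or_aleph0_le v).resolve_right (hlt v).not_ge]
  exact zero_le

theorem SatisfiesDemand.partiallySatisfiesDemand {f : V → Bool} (hf : SatisfiesDemand G d f) :
    PartiallySatisfiesDemand G d fun i ↦ f ⁻¹' {i} where
  disjoint := Disjoint.preimage f (by simp)
  le_mk i v hv := by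
    obtain rfl : f v = i := hv
    exact hf v

theorem PartiallySatisfiesDemand.exists_satisfiesDemand {p : Bool → Set V}
    (hp : PartiallySatisfiesDemand G d p) (hcover : ∀ v, ∃ i, v ∈ p i) :
    ∃ f, SatisfiesDemand G d f := by
  classical
  have hcompl : p false = (p true)ᶜ := by
    refine (subset_compl_iff_disjoint_right.2 hp.disjoint).antisymm fun v hv ↦ ?_
    obtain ⟨_ | _, hi⟩ := hcover v
    exacts [hi, (hv hi).elim]
  have hclass (i : Bool) : (fun v ↦ decide (v ∈ p true)) ⁻¹' {i} = p i := by
    cases i <;> ext v <;> simp [hcompl]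
  refine ⟨fun v ↦ decide (v ∈ p true), fun v ↦ ?_⟩
  rw [hclass]
  exact hp.le_mk _ v ((hclass _).subset rfl)

theorem le_mk_image_of_mk_preimage_lt {β : Type u} (hκ : κ.IsRegular) {b : V → β}
    (hb : ∀ v, #(b ⁻¹' {b v}) < κ) {s : Set V} (hs : κ ≤ #s) : κ ≤ #(b '' s) := by
  by_contra! h
  have hlt : #(⋃ x ∈ b '' s, b ⁻¹' {x}) < κ :=
    (card_biUnion_lt_iff_forall_of_isRegular hκ h).2 (forall_mem_image.2 fun v _ ↦ hb v)
  refine (hs.trans (mk_le_mk_of_subset fun v hv ↦ ?_)).not_gt hlt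
  exact mem_biUnion (mem_image_of_mem b hv) rfl

/-- Satisfy the demands below `κ` inside each block. Exchanging the two colours on a whole block
preserves this, and suitable exchanges satisfy the demands equal to `κ`. -/
theorem exists_satisfiesDemand_of_blocks {β : Type u} (hκ : κ.IsRegular)
    (hbelow : DemandsSatisfiableBelow κ) (hd : IsDemand G d) (hdκ : ∀ v, d v ≤ κ) (hV : #V ≤ κ)
    {b : V → β} (hb : ∀ v, #(b ⁻¹' {b v}) < κ)
    (hlow : ∀ v, d v < κ → d v ≤ #↑(G.neighborSet v ∩ b ⁻¹' {b v})) :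
    ∃ f, SatisfiesDemand G d f := by
  classical
  let G' : SimpleGraph V :=
    { Adj v w := G.Adj v w ∧ b v = b w
      symm := ⟨fun _ _ h ↦ ⟨h.1.symm, h.2.symm⟩⟩ }
  have hG' (v : V) : G'.neighborSet v = G.neighborSet v ∩ b ⁻¹' {b v} := by
    ext w
    simp [G', eq_comm]
  obtain ⟨f, hf⟩ := hbelow V G' (fun v ↦ if d v < κ then d v else 0)
    { eq_zero_or_aleph0_le v := by
        split_ifs
        exacts [hd.eq_zero_or_aleph0_le v, .inl rfl]
      le_mk_neighborSet v := by
        split_ifs with hv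
        exacts [(hG' v).symm ▸ hlow v hv, zero_le] }
    fun v ↦ by split_ifs with hv; exacts [hv, hκ.pos]
  obtain ⟨t, ht⟩ := exists_forall_le_mk_inter_preimage_xor (ι := {v // κ ≤ d v}) hκ.aleph0_le
    ((mk_subtype_le _).trans hV) (N := fun v ↦ G.neighborSet v)
    (fun v ↦ le_mk_image_of_mk_preimage_lt hκ hb (v.2.trans (hd.le_mk_neighborSet v))) f
  refine ⟨fun v ↦ f v ^^ t (b v), fun v ↦ ?_⟩
  rcases (hdκ v).lt_or_eq with hv | hv
  · have hfv := hf v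
    simp only [hv, if_true, hG'] at hfv
    refine hfv.trans (mk_le_mk_of_subset ?_)
    rintro w ⟨⟨hvw, hbw⟩, hfw⟩
    exact ⟨hvw, by simp_all⟩
  · exact hv.trans_le (ht ⟨v, hv.ge⟩ _)

end Demand

section RegularOrder

variable {V : Type u} [LinearOrder V] [WellFoundedLT V] [IsRegularCardinalOrder V]
  {G : SimpleGraph V} {d : V → Cardinal.{u}}

/-- The stages `a` of the enumeration by which some vertex not yet reached has its demand covered
by the vertices already reached. -/
def earlyStages (G : SimpleGraph V) (d : V → Cardinal.{u}) : Set V :=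
  {a | ∃ y ≥ a, d y ≤ #↑(G.neighborSet y ∩ Iio a)}

/-- The vertices `x ∈ P` adjacent to `y a` for stationarily many `a` form one class. A diagonal
intersection makes all other vertices of `P` irrelevant to the class of the `y a`. -/
theorem exists_partiallySatisfiesDemand_of_isStationary (hV : ℵ₀ < #V) (hdV : ∀ v, d v ≤ #V)
    {P S : Set V} (hS : IsStationary S) {y : V → V} (hle : ∀ a ∈ S, a ≤ y a)
    (hP : ∀ a ∈ S, y a ∉ P)
    (hdy : ∀ a ∈ S, d (y a) ≤ #↑(G.neighborSet (y a) ∩ (P ∩ Iio a))) :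
    ∃ p, PartiallySatisfiesDemand G d p ∧ ∃ i, (p i).Nonempty := by
  have hcof : cof V ≠ ℵ₀ := by simpa using hV.ne'
  let T (x : V) : Set V := {a ∈ S | G.Adj x (y a)}
  have avoid (x : V) : ∃ K, IsClub K ∧ (¬IsStationary (T x) → Disjoint (T x) K) := by
    by_cases hx : IsStationary (T x)
    · exact ⟨univ, .univ, fun h ↦ (h hx).elim⟩
    · exact (not_isStationary_iff.1 hx).imp fun K hK ↦ ⟨hK.1, fun _ ↦ hK.2⟩
  choose K hK hTK using avoid
  have hD : IsClub (diagInter K) := isClub_diagInter hV hK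
  have hcofinal {x : V} (hx : IsStationary (T x)) : IsCofinal (y '' (T x ∩ diagInter K)) := by
    intro a₀
    obtain ⟨a, haT, haD, ha⟩ := hx (hD.inter hcof (isClub_Ici a₀))
    exact ⟨y a, mem_image_of_mem y ⟨haT, haD⟩, ha.trans (hle a haT.1)⟩
  refine ⟨fun i ↦ bif i then {x ∈ P | IsStationary (T x)} else y '' (S ∩ diagInter K),
    ⟨?_, Bool.forall_bool.2 ⟨?_, ?_⟩⟩, false, (hS hD).image y⟩
  · rw [Set.disjoint_left]
    rintro _ ⟨a, ha, rfl⟩ hx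
    exact hP a ha.1 hx.1
  · rintro _ ⟨a, ⟨haS, haD⟩, rfl⟩
    refine (hdy a haS).trans (mk_le_mk_of_subset ?_)
    rintro x ⟨hyx, hxP, hxa⟩
    refine ⟨hyx, hxP, ?_⟩
    by_contra hx
    exact Set.disjoint_left.1 (hTK x hx) ⟨haS, hyx.symm⟩ (haD x hxa)
  · rintro x ⟨-, hx⟩
    calc
      d x ≤ cof V := by simpa using hdV x
      _ ≤ #↑(y '' (T x ∩ diagInter K)) := cof_le (hcofinal hx)
      _ ≤ _ := mk_le_mk_of_subset ?_
    rintro _ ⟨a, ⟨⟨haS, hxa⟩, haD⟩, rfl⟩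
    exact ⟨hxa, a, ⟨haS, haD⟩, rfl⟩

theorem exists_partiallySatisfiesDemand_of_isStationary_earlyStages (hV : ℵ₀ < #V)
    (hd : IsDemand G d) (hdV : ∀ v, d v ≤ #V)
    (hS : IsStationary (earlyStages G d)) :
    ∃ p, PartiallySatisfiesDemand G d p ∧ ∃ i, (p i).Nonempty := by
  have hcof : cof V ≠ ℵ₀ := by simpa using hV.ne'
  -- An initial segment of the neighbours of `y`, as short as it can be while meeting the demand.
  let N (y : V) : Set V :=
    {x ∈ G.neighborSet y | x < y ∧ ∀ a, d y ≤ #↑(G.neighborSet y ∩ Iio a) → x < a}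
  have hdN {a y : V} (hay : a ≤ y) (hy : d y ≤ #↑(G.neighborSet y ∩ Iio a)) : d y ≤ #(N y) := by
    obtain ⟨m, hm, hmin⟩ := wellFounded_lt.has_min {a | d y ≤ #↑(G.neighborSet y ∩ Iio a)} ⟨a, hy⟩
    refine hm.trans (mk_le_mk_of_subset fun x hx ↦ ⟨hx.1, ?_, fun b hb ↦ ?_⟩)
    · exact hx.2.trans_le ((not_lt.1 (hmin a hy)).trans hay)
    · exact hx.2.trans_le (not_lt.1 (hmin b hb))
  obtain ⟨f, hf⟩ := exists_forall_le_mk_inter_preimage_not (N := N) fun y x hx ↦ hx.2.1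
  choose! y hle hdy using fun a (ha : a ∈ earlyStages G d) ↦ ha
  obtain ⟨i, hi⟩ : ∃ i, IsStationary {a ∈ earlyStages G d | f (y a) = i} := by
    rw [← isStationary_iUnion_iff_of_countable hcof]
    exact hS.mono fun a ha ↦ mem_iUnion.2 ⟨f (y a), ha, rfl⟩
  refine exists_partiallySatisfiesDemand_of_isStationary hV hdV hi (P := f ⁻¹' {!i}) (y := y)
    (fun a ha ↦ hle a ha.1) (fun a ha ↦ by simp [ha.2]) fun a ⟨ha, hfa⟩ ↦ ?_
  refine (hf (y a) _ (hd.eq_zero_or_aleph0_le _) (hdN (hle a ha) (hdy a ha))).trans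
    (mk_le_mk_of_subset fun x hx ↦ ?_)
  exact ⟨hx.1.1, hfa ▸ hx.2, hx.1.2.2 a (hdy a ha)⟩

theorem IsDemand.exists_le_mk_inter_Iio (hd : IsDemand G d) {v : V} (hv : d v < #V) :
    ∃ a, d v ≤ #↑(G.neighborSet v ∩ Iio a) := by
  obtain ⟨s, hs, hsd⟩ := le_mk_iff_exists_subset.1 (hd.le_mk_neighborSet v)
  obtain ⟨a, ha⟩ := exists_forall_lt_of_mk_lt (hsd.trans_lt hv)
  exact ⟨a, hsd.ge.trans (mk_le_mk_of_subset fun x hx ↦ ⟨hs hx, ha x hx⟩)⟩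

theorem inter_Ioi_nonempty_of_isClub {D : Set V} (hV : 1 < #V) (hD : IsClub D) (v : V) :
    (D ∩ Ioi v).Nonempty := by
  obtain ⟨a, ha⟩ := exists_forall_lt_of_mk_lt (s := {v}) (by simpa using hV)
  obtain ⟨e, heD, hae⟩ := hD.isCofinal a
  exact ⟨e, heD, (ha v rfl).trans_le hae⟩

theorem mk_preimage_inter_Iic_lt {D : Set V} (hV : 1 < #V) (hD : IsClub D) (v : V) :
    #↑((fun w ↦ D ∩ Iic w) ⁻¹' {D ∩ Iic v}) < #V := by
  obtain ⟨e, heD, hve⟩ := inter_Ioi_nonempty_of_isClub hV hD v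
  refine (mk_le_mk_of_subset fun w hw ↦ ?_).trans_lt (mk_Iio_lt e ord_cardinalMk)
  by_contra hew
  have hev : e ∈ D ∩ Iic v := hw.subset ⟨heD, not_lt.1 hew⟩
  exact hev.2.not_gt hve

/-- The blocks are the intervals between consecutive elements of a club `D`. A low demand of `v` is
met below the right end of its block, and by the choice of `D` it is not met below the left end. -/
theorem exists_blocks_of_not_isStationary_earlyStages (hV : ℵ₀ < #V) (hd : IsDemand G d)
    (hS : ¬IsStationary (earlyStages G d)) :
    ∃ b : V → Set V, (∀ v, #(b ⁻¹' {b v}) < #V) ∧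
      ∀ v, d v < #V → d v ≤ #↑(G.neighborSet v ∩ b ⁻¹' {b v}) := by
  obtain ⟨K, hK, hdisj⟩ := not_isStationary_iff.1 hS
  choose! g hg using fun v ↦ hd.exists_le_mk_inter_Iio (v := v)
  have hcof : cof V ≠ ℵ₀ := by simpa using hV.ne'
  let D := K ∩ diagInter fun v ↦ Ici (g v)
  have hD : IsClub D := hK.inter hcof (isClub_diagInter hV fun v ↦ isClub_Ici (g v))
  have hV₁ : 1 < #V := one_lt_aleph0.trans hV
  refine ⟨fun v ↦ D ∩ Iic v, mk_preimage_inter_Iic_lt hV₁ hD, fun v hv ↦ ?_⟩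
  obtain ⟨e, ⟨heD, hve⟩, he⟩ :=
    wellFounded_lt.has_min (D ∩ Ioi v) (inter_Ioi_nonempty_of_isClub hV₁ hD v)
  have hve_meet : d v ≤ #↑(G.neighborSet v ∩ Iio e) :=
    (hg v hv).trans (mk_le_mk_of_subset (inter_subset_inter_right _
      (Iio_subset_Iio (heD.2 v hve))))
  have hblock {w : V} (hwe : w < e) (hw : ∀ x ∈ D, x ≤ v → x ≤ w) : D ∩ Iic w = D ∩ Iic v := by
    ext x
    refine ⟨fun hx ↦ ⟨hx.1, ?_⟩, fun hx ↦ ⟨hx.1, hw x hx.1 hx.2⟩⟩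
    by_contra hvx
    exact he x ⟨hx.1, not_le.1 hvx⟩ (hx.2.trans_lt hwe)
  rcases (D ∩ Iic v).eq_empty_or_nonempty with hempty | hne
  · refine hve_meet.trans (mk_le_mk_of_subset fun w hw ↦ ⟨hw.1, hblock hw.2 fun x hxD hxv ↦ ?_⟩)
    exact (hempty.subset ⟨hxD, hxv⟩).elim
  obtain ⟨m, hm⟩ := exists_isLUB_of_bddAbove (s := D ∩ Iic v) ⟨v, fun x hx ↦ hx.2⟩
  have hmD : m ∈ D := hD.isLUB_mem inter_subset_left hne hm
  have hmv : m ≤ v := hm.2 fun x hx ↦ hx.2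
  refine (le_mk_or_le_mk_of_subset_union_s1 (hd.eq_zero_or_aleph0_le v) hve_meet
    (t₁ := G.neighborSet v ∩ Iio m) fun w hw ↦ ?_).resolve_left
    fun h ↦ Set.disjoint_left.1 hdisj ⟨v, hmv, h⟩ hmD.1
  rcases lt_or_ge w m with hwm | hmw
  · exact .inl ⟨hw.1, hwm⟩
  · exact .inr ⟨hw.1, hblock hw.2 fun x hxD hxv ↦ (hm.1 ⟨hxD, hxv⟩).trans hmw⟩

end RegularOrder

section Extension

variable {V : Type u} {G : SimpleGraph V} {d : V → Cardinal.{u}} {κ : Cardinal.{u}}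

theorem SatisfiesDemand.exists_partiallySatisfiesDemand [Nonempty V] {f : V → Bool}
    (hf : SatisfiesDemand G d f) :
    ∃ p, PartiallySatisfiesDemand G d p ∧ ∃ i, (p i).Nonempty :=
  ⟨_, hf.partiallySatisfiesDemand, f (Classical.arbitrary V), Classical.arbitrary V, rfl⟩

theorem exists_isRegularCardinalOrder (hV : (#V).IsRegular) :
    ∃ (_ : LinearOrder V) (_ : WellFoundedLT V), IsRegularCardinalOrder V := by
  obtain ⟨_, _, h⟩ := exists_ord_eq_type_lt V
  refine ⟨_, ‹_›, ⟨?_⟩⟩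
  rw [← h, ord_le_ord, ← Ordinal.cof_type, ← h]
  exact hV.le_cof_ord

theorem exists_partiallySatisfiesDemand_of_mk_le [Nonempty V] (hκ : κ.IsRegular)
    (hbelow : DemandsSatisfiableBelow κ) (hV : #V ≤ κ) (hd : IsDemand G d) :
    ∃ p, PartiallySatisfiesDemand G d p ∧ ∃ i, (p i).Nonempty := by
  have hdV (v : V) : d v ≤ #V := (hd.le_mk_neighborSet v).trans (mk_set_le _)
  rcases hV.lt_or_eq with hlt | rfl
  · obtain ⟨f, hf⟩ := hbelow V G d hd fun v ↦ (hdV v).trans_lt hlt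
    exact hf.exists_partiallySatisfiesDemand
  rcases hκ.aleph0_le.eq_or_lt with hω | hω
  · obtain ⟨f, hf⟩ := exists_satisfiesDemand_of_blocks hκ hbelow hd hdV le_rfl (b := id)
      (fun v ↦ by simpa using one_lt_aleph0.trans_le hκ.aleph0_le) fun v hv ↦ by
        rw [(hd.eq_zero_or_aleph0_le v).resolve_right (hω ▸ hv).not_ge]
        exact zero_le
    exact hf.exists_partiallySatisfiesDemand
  obtain ⟨_, _, _⟩ := exists_isRegularCardinalOrder hκ
  by_cases hS : IsStationary (earlyStages G d)
  · exact exists_partiallySatisfiesDemand_of_isStationary_earlyStages hω hd hdV hS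
  · obtain ⟨b, hb, hlow⟩ := exists_blocks_of_not_isStationary_earlyStages hω hd hS
    obtain ⟨f, hf⟩ := exists_satisfiesDemand_of_blocks hκ hbelow hd hdV le_rfl hb hlow
    exact hf.exists_partiallySatisfiesDemand

theorem mk_neighborSet_induce (s : Set V) (v : s) :
    #((G.induce s).neighborSet v) = #↑(G.neighborSet v ∩ s) := by
  rw [SimpleGraph.neighborSet_induce, inter_comm, ← Subtype.image_preimage_coe,
    mk_image_eq Subtype.val_injective]

theorem exists_mk_le_forall_mem_subset (hκ : ℵ₀ ≤ κ) (N : V → Set V) (hN : ∀ v, #(N v) ≤ κ)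
    (v₀ : V) : ∃ s : Set V, v₀ ∈ s ∧ #s ≤ κ ∧ ∀ v ∈ s, N v ⊆ s := by
  let s (n : ℕ) : Set V := (fun t ↦ ⋃ v ∈ t, N v)^[n] {v₀}
  have hsucc (n : ℕ) : s (n + 1) = ⋃ v ∈ s n, N v := Function.iterate_succ_apply' _ _ _
  have hcard (n : ℕ) : #(s n) ≤ κ := by
    induction n with
    | zero => simpa [s] using one_le_aleph0.trans hκ
    | succ n ih =>
      rw [hsucc, biUnion_eq_iUnion]
      exact (mk_iUnion_le _).trans (mul_le_of_le hκ ih (ciSup_le' fun v ↦ hN v))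
  refine ⟨⋃ n, s n, mem_iUnion.2 ⟨0, rfl⟩, ?_, fun v hv ↦ ?_⟩
  · simpa using (mk_iUnion_le_lift s).trans
      (mul_le_of_le (by simpa using hκ) (by simpa using hκ) (ciSup_le' fun n ↦ lift_le.2 (hcard n)))
  · obtain ⟨n, hn⟩ := mem_iUnion.1 hv
    exact ((subset_biUnion_of_mem (u := N) hn).trans (hsucc n).ge).trans (subset_iUnion s (n + 1))

theorem IsDemand.exists_induce [Nonempty V] (hd : IsDemand G d) (hκ : ℵ₀ ≤ κ)
    (hdκ : ∀ v, d v ≤ κ) :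
    ∃ s : Set V, s.Nonempty ∧ #s ≤ κ ∧ IsDemand (G.induce s) fun v ↦ d v := by
  choose N hN hNd using fun v ↦ le_mk_iff_exists_subset.1 (hd.le_mk_neighborSet v)
  obtain ⟨s, hv₀, hsκ, hclosed⟩ :=
    exists_mk_le_forall_mem_subset hκ N (fun v ↦ (hNd v).trans_le (hdκ v)) (Classical.arbitrary V)
  refine ⟨s, ⟨_, hv₀⟩, hsκ, fun v ↦ hd.eq_zero_or_aleph0_le v, fun v ↦ ?_⟩
  rw [mk_neighborSet_induce, ← hNd v]
  exact mk_le_mk_of_subset (subset_inter (hN v) (hclosed v v.2))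

namespace PartiallySatisfiesDemand

theorem image_val {s : Set V} {p : Bool → Set s}
    (hp : PartiallySatisfiesDemand (G.induce s) (fun v ↦ d v) p) :
    PartiallySatisfiesDemand G d fun i ↦ Subtype.val '' p i where
  disjoint := (disjoint_image_iff Subtype.val_injective).2 hp.disjoint
  le_mk := by
    rintro i _ ⟨v, hv, rfl⟩
    refine (hp.le_mk i v hv).trans ?_
    rw [← mk_image_eq Subtype.val_injective]
    refine mk_le_mk_of_subset ?_
    rintro _ ⟨w, hw, rfl⟩
    exact ⟨hw.1, w, hw.2, rfl⟩

theorem sup {p q : Bool → Set V} (hp : PartiallySatisfiesDemand G d p)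
    (hdisj : ∀ i, Disjoint (p i) (q !i)) (hq : Disjoint (q false) (q true))
    (hqd : ∀ i, ∀ v ∈ q i, d v ≤ #↑(G.neighborSet v ∩ (p ⊔ q) !i)) :
    PartiallySatisfiesDemand G d (p ⊔ q) where
  disjoint := (hp.disjoint.sup_right (hdisj false)).sup_left ((hdisj true).symm.sup_right hq)
  le_mk i v hv := hv.elim
    (fun h ↦ (hp.le_mk i v h).trans (mk_le_mk_of_subset
      (inter_subset_inter_right _ subset_union_left)))
    (hqd i v)

theorem sSup_of_isChain {c : Set (Bool → Set V)} (hc : IsChain (· ≤ ·) c)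
    (hcp : ∀ p ∈ c, PartiallySatisfiesDemand G d p) : PartiallySatisfiesDemand G d (sSup c) where
  disjoint := by
    rw [Set.disjoint_left]
    simp only [sSup_apply, iSup_eq_iUnion, mem_iUnion]
    rintro v ⟨⟨p, hp⟩, hvp⟩ ⟨⟨q, hq⟩, hvq⟩
    rcases hc.total hp hq with h | h
    · exact Set.disjoint_left.1 (hcp q hq).disjoint (h _ hvp) hvq
    · exact Set.disjoint_left.1 (hcp p hp).disjoint hvp (h _ hvq)
  le_mk i v hv := by
    simp only [sSup_apply, iSup_eq_iUnion, mem_iUnion] at hv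
    obtain ⟨⟨p, hp⟩, hvp⟩ := hv
    exact ((hcp p hp).le_mk i v hvp).trans
      (mk_le_mk_of_subset (inter_subset_inter_right _ (le_sSup hp _)))

variable (G d) in
theorem exists_maximal : ∃ p, Maximal (PartiallySatisfiesDemand G d) p :=
  zorn_le₀ {p | PartiallySatisfiesDemand G d p} fun _ hcp hc ↦
    ⟨_, sSup_of_isChain hc hcp, fun _ ↦ le_sSup⟩

theorem exists_mem_of_maximal {p : Bool → Set V} (hp : Maximal (PartiallySatisfiesDemand G d) p)
    {v : V} {i : Bool} (hv : d v ≤ #↑(G.neighborSet v ∩ p i)) : ∃ j, v ∈ p j := by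
  by_contra! hvp
  have hq : PartiallySatisfiesDemand G d (p ⊔ fun j ↦ {w | w = v ∧ j = !i}) := by
    refine hp.prop.sup (fun j ↦ ?_) ?_ ?_
    · rw [Set.disjoint_left]
      rintro w hw ⟨rfl, -⟩
      exact hvp j hw
    · rw [Set.disjoint_left]
      rintro w ⟨-, h⟩ ⟨-, h'⟩
      exact Bool.false_ne_true (h.trans h'.symm)
    · rintro _ _ ⟨rfl, rfl⟩
      rw [Bool.not_not]
      exact hv.trans (mk_le_mk_of_subset (inter_subset_inter_right _ subset_union_left))
  exact hvp (!i) (hp.le_of_ge hq le_sup_left _ (.inr ⟨rfl, rfl⟩))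

end PartiallySatisfiesDemand

theorem IsDemand.induce_compl_of_maximal {p : Bool → Set V} (hd : IsDemand G d)
    (hp : Maximal (PartiallySatisfiesDemand G d) p) :
    IsDemand (G.induce (⋃ i, p i)ᶜ) fun v ↦ d v where
  eq_zero_or_aleph0_le v := hd.eq_zero_or_aleph0_le v
  le_mk_neighborSet v := by
    have hd₀ := hd.eq_zero_or_aleph0_le v
    have hmem (i : Bool) : ¬d v ≤ #↑(G.neighborSet v ∩ p i) := fun h ↦
      v.2 (mem_iUnion.2 (PartiallySatisfiesDemand.exists_mem_of_maximal hp h))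
    rw [mk_neighborSet_induce]
    refine (le_mk_or_le_mk_of_subset_union_s1 hd₀ (hd.le_mk_neighborSet v)
      (inter_union_compl _ (⋃ i, p i)).ge).resolve_left fun h ↦ ?_
    have hclasses : G.neighborSet v ∩ ⋃ i, p i ⊆
        (G.neighborSet v ∩ p false) ∪ (G.neighborSet v ∩ p true) := by
      rintro w ⟨hvw, hw⟩
      obtain ⟨_ | _, hi⟩ := mem_iUnion.1 hw
      exacts [.inl ⟨hvw, hi⟩, .inr ⟨hvw, hi⟩]
    exact (le_mk_or_le_mk_of_subset_union_s1 hd₀ h hclasses).elim (hmem false) (hmem true)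

theorem exists_satisfiesDemand_of_forall_induce (hd : IsDemand G d)
    (h : ∀ s : Set V, s.Nonempty → IsDemand (G.induce s) (fun v ↦ d v) →
      ∃ p, PartiallySatisfiesDemand (G.induce s) (fun v ↦ d v) p ∧ ∃ i, (p i).Nonempty) :
    ∃ f, SatisfiesDemand G d f := by
  obtain ⟨p, hp⟩ := PartiallySatisfiesDemand.exists_maximal G d
  refine hp.prop.exists_satisfiesDemand fun v ↦ ?_
  by_contra! hv
  obtain ⟨q, hq, i, w, hw⟩ := h (⋃ i, p i)ᶜ ⟨v, by simpa using hv⟩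
    (hd.induce_compl_of_maximal hp)
  have hpq : PartiallySatisfiesDemand G d (p ⊔ fun i ↦ Subtype.val '' q i) := by
    refine hp.prop.sup (fun j ↦ ?_) hq.image_val.disjoint fun j v hv ↦ ?_
    · rw [Set.disjoint_right]
      rintro _ ⟨x, -, rfl⟩ hx
      exact x.2 (mem_iUnion.2 ⟨j, hx⟩)
    · exact (hq.image_val.le_mk j v hv).trans
        (mk_le_mk_of_subset (inter_subset_inter_right _ subset_union_right))
  exact w.2 (mem_iUnion.2 ⟨i, hp.le_of_ge hpq le_sup_left i (.inr ⟨w, hw, rfl⟩)⟩)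

theorem DemandsSatisfiableBelow.succ (hκ : κ.IsRegular) (hbelow : DemandsSatisfiableBelow κ) :
    DemandsSatisfiableBelow (Order.succ κ) := by
  intro V G d hd hdκ
  refine exists_satisfiesDemand_of_forall_induce hd fun s hs hds ↦ ?_
  have := hs.to_subtype
  obtain ⟨t, ht, htκ, hdt⟩ := hds.exists_induce hκ.aleph0_le fun v ↦ lt_succ_iff.1 (hdκ v)
  have := ht.to_subtype
  obtain ⟨p, hp, i, hpi⟩ := exists_partiallySatisfiesDemand_of_mk_le hκ hbelow htκ hdt
  exact ⟨_, hp.image_val, i, hpi.image _⟩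

end Extension

theorem isRegular_aleph_nat (n : ℕ) : (ℵ_ n).IsRegular := by
  cases n with
  | zero => simpa using isRegular_aleph0
  | succ n => simpa using isRegular_aleph_add_one n

theorem demandsSatisfiableBelow_aleph (n : ℕ) : DemandsSatisfiableBelow (ℵ_ n) := by
  induction n with
  | zero => simpa using demandsSatisfiableBelow_aleph0
  | succ n ih => simpa using ih.succ (isRegular_aleph_nat n)

theorem isDemand_min_mk_neighborSet {V : Type u} {G : SimpleGraph V} {κ : Cardinal.{u}}
    (hκ : ℵ₀ ≤ κ) (hdeg : ∀ v, (G.neighborSet v).Infinite) :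
    IsDemand G fun v ↦ min κ #(G.neighborSet v) where
  eq_zero_or_aleph0_le v := .inr (le_min hκ (aleph0_le_mk_iff.2 (hdeg v).to_subtype))
  le_mk_neighborSet _ := min_le_right _ _

theorem SatisfiesDemand.kUnfriendlyPartition {V : Type u} {G : SimpleGraph V} {κ : Cardinal.{u}}
    {f : V → Bool} (hf : SatisfiesDemand G (fun v ↦ min κ #(G.neighborSet v)) f) :
    KUnfriendlyPartition G κ fun v ↦ finTwoEquiv.symm (f v) := by
  intro v
  have hopp : #{w // G.Adj v w ∧ finTwoEquiv.symm (f w) ≠ finTwoEquiv.symm (f v)} =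
      #↑(G.neighborSet v ∩ f ⁻¹' {!f v}) :=
    mk_congr (Equiv.subtypeEquivRight fun w ↦ by simp [Bool.eq_not])
  rw [hopp]
  exact (min_le_iff.1 (hf v)).imp id (mk_le_mk_of_subset fun w hw ↦ hw.1).trans

theorem stmt1 (n : ℕ) {V : Type u} (G : SimpleGraph V)
    (hdeg : ∀ x : V, (G.neighborSet x).Infinite) :
    ∃ π : V → Fin 2, KUnfriendlyPartition G (Cardinal.aleph n) π := by
  have hlt (v : V) : min (ℵ_ n) #(G.neighborSet v) < ℵ_ ((n + 1 : ℕ) : Ordinal) :=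
    (min_le_left _ _).trans_lt (aleph_lt_aleph.2 (by simp))
  obtain ⟨f, hf⟩ := demandsSatisfiableBelow_aleph (n + 1) V G _
    (isDemand_min_mk_neighborSet (aleph0_le_aleph n) hdeg) hlt
  exact ⟨_, hf.kUnfriendlyPartition⟩
end

section
/- Let Γ=(G,𝒞) be a graph with conditions, where G=(V,E). Then there exists a family of finite conditions 𝒞'=(κ'_x,λ'_x)_{x∈V} on G with κ'_x = λ'_x = 0 for every vertex x of infinite degree, such that every ω-unfriendly partition of Γ'=(G,𝒞') is an ω-unfriendly partition of Γ. -/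
open Cardinal

universe u

/-- `π` is a `μ`-unfriendly partition of the graph with conditions `(G, C)`:
for each vertex `x`, if `π x = 0` then `κ_x + |{neighbours of colour 0}|` is at most
`λ_x + |{neighbours of colour 1}|`, and symmetrically if `π x = 1`, except possibly
when the two compared cardinals are both `≥ μ`. -/
def CondMuUnfriendly {V : Type u} (G : SimpleGraph V) (C : V → Cardinal.{u} × Cardinal.{u})
    (μ : Cardinal.{u}) (π : V → Fin 2) : Prop :=
  ∀ x : V,
    (π x = 0 →
      (C x).1 + #{y : V // G.Adj x y ∧ π y = 0} ≤ (C x).2 + #{y : V // G.Adj x y ∧ π y = 1} ∨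
      (μ ≤ (C x).1 + #{y : V // G.Adj x y ∧ π y = 0} ∧
        μ ≤ (C x).2 + #{y : V // G.Adj x y ∧ π y = 1})) ∧
    (π x = 1 →
      (C x).2 + #{y : V // G.Adj x y ∧ π y = 1} ≤ (C x).1 + #{y : V // G.Adj x y ∧ π y = 0} ∨
      (μ ≤ (C x).1 + #{y : V // G.Adj x y ∧ π y = 0} ∧
        μ ≤ (C x).2 + #{y : V // G.Adj x y ∧ π y = 1}))

/-!
Fix a vertex of degree `d`, whose colour classes of neighbours have sizes `a + b = d`. A comparison
up to `μ` of `κ + a` with `λ + b` says `min (κ + a) μ ≤ λ + b`, so it is decided by the truncations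
of `κ + a` and `λ + b` at `μ`. If `d ≥ μ`, one of `a`, `b` is at least `μ`, so a valid comparison of
`a` with `b` has its larger side at least `μ`, and adding `κ` and `λ` keeps it valid. If `d < μ`,
conditions below `μ` are kept; if exactly one of them is `≥ μ`, it always wins, and since `μ` is a
limit it can be replaced by the successor of the other one plus `d`; if both are `≥ μ`, every
comparison is valid.
-/

theorem le_or_le_and_le_iff_min_le {α : Type*} [LinearOrder α] {m a b : α} :
    (a ≤ b ∨ m ≤ a ∧ m ≤ b) ↔ min a m ≤ b := by
  rw [min_le_iff]
  refine ⟨Or.imp_right And.right, fun h => ?_⟩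
  rcases le_total a b with hab | hba
  · exact .inl hab
  · exact h.imp_right fun hmb => ⟨hmb.trans hba, hmb⟩

theorem condMuUnfriendly_iff_min_le {V : Type u} {G : SimpleGraph V}
    {C : V → Cardinal.{u} × Cardinal.{u}} {μ : Cardinal.{u}} {π : V → Fin 2} :
    CondMuUnfriendly G C μ π ↔ ∀ x : V,
      (π x = 0 → min ((C x).1 + #{y : V // G.Adj x y ∧ π y = 0}) μ ≤
        (C x).2 + #{y : V // G.Adj x y ∧ π y = 1}) ∧
      (π x = 1 → min ((C x).2 + #{y : V // G.Adj x y ∧ π y = 1}) μ ≤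
        (C x).1 + #{y : V // G.Adj x y ∧ π y = 0}) := by
  refine forall_congr' fun x =>
    and_congr (imp_congr_right fun _ => ?_) (imp_congr_right fun _ => ?_)
  · exact le_or_le_and_le_iff_min_le
  · exact (or_congr_right and_comm).trans le_or_le_and_le_iff_min_le

theorem mk_and_eq_zero_add_mk_and_eq_one {α : Type u} (p : α → Prop) (f : α → Fin 2) :
    #{y // p y ∧ f y = 0} + #{y // p y ∧ f y = 1} = #{y // p y} := by
  have hdisj : Disjoint {y | p y ∧ f y = 0} {y | p y ∧ f y = 1} :=
    Set.disjoint_left.2 fun y h₀ h₁ => zero_ne_one (h₀.2.symm.trans h₁.2)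
  have hunion : {y | p y ∧ f y = 0} ∪ {y | p y ∧ f y = 1} = {y | p y} := by
    ext y
    have : f y = 0 ∨ f y = 1 := by omega
    simp only [Set.mem_union, Set.mem_ofPred_eq]
    tauto
  exact (mk_union_of_disjoint hdisj).symm.trans (congrArg (fun s : Set α => #s) hunion)

theorem min_add_le_add_of_min_le {μ k l a b : Cardinal.{u}} (hμ : ℵ₀ ≤ μ) (hd : μ ≤ a + b)
    (h : min a μ ≤ b) : min (k + a) μ ≤ l + b := by
  have hb : μ ≤ b := by
    by_contra! hb
    have ha : a < μ := ((min_le_iff.1 h).resolve_right hb.not_ge).trans_lt hb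
    exact (add_lt_of_lt hμ ha hb).not_ge hd
  exact (min_le_right _ _).trans (hb.trans le_add_self)

/-- The condition below the limit cardinal `μ` that replaces `k` at a vertex of degree `d`, where
`l` is the condition for the opposite colour; exchanging `k` and `l` gives the replacement
of `l`. The last value `0` is arbitrary: every comparison of colours is valid if `k, l ≥ μ`. -/
noncomputable def truncatedCondition (μ d k l : Cardinal.{u}) : Cardinal.{u} :=
  if μ ≤ d then 0 else if k < μ then k else if l < μ then Order.succ (l + d) else 0

section truncatedCondition

variable {μ d k l a b : Cardinal.{u}}

theorem truncatedCondition_eq_zero_of_le (hd : μ ≤ d) : truncatedCondition μ d k l = 0 :=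
  if_pos hd

theorem truncatedCondition_eq_self (hd : d < μ) (hk : k < μ) : truncatedCondition μ d k l = k := by
  rw [truncatedCondition, if_neg hd.not_ge, if_pos hk]

theorem truncatedCondition_eq_succ (hd : d < μ) (hk : μ ≤ k) (hl : l < μ) :
    truncatedCondition μ d k l = Order.succ (l + d) := by
  rw [truncatedCondition, if_neg hd.not_ge, if_neg hk.not_gt, if_pos hl]

theorem truncatedCondition_lt (hμ : Order.IsSuccLimit μ) : truncatedCondition μ d k l < μ := by
  have hμ₀ : 0 < μ := hμ.bot_lt
  unfold truncatedCondition
  split_ifs with hd hk hl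
  · exact hμ₀
  · exact hk
  · exact hμ.succ_lt (add_lt_of_lt (aleph0_le_of_isSuccLimit hμ) hl (not_le.1 hd))
  · exact hμ₀

theorem min_add_le_of_min_truncatedCondition_add_le_of_lt (hd : a + b < μ)
    (h : min (truncatedCondition μ (a + b) k l + a) μ ≤ truncatedCondition μ (a + b) l k + b) :
    min (k + a) μ ≤ l + b := by
  rw [min_le_iff, or_iff_not_imp_right, not_le]
  intro hlb
  have hl : l < μ := le_self_add.trans_lt hlb
  have hcmp : truncatedCondition μ (a + b) k l + a ≤ l + b := by
    rw [truncatedCondition_eq_self hd hl, min_le_iff] at h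
    exact h.resolve_right hlb.not_ge
  rcases lt_or_ge k μ with hk | hk
  · rwa [truncatedCondition_eq_self hd hk] at hcmp
  · have hsucc : Order.succ (l + (a + b)) ≤ l + (a + b) :=
      calc
        Order.succ (l + (a + b)) = truncatedCondition μ (a + b) k l :=
          (truncatedCondition_eq_succ hd hk hl).symm
        _ ≤ truncatedCondition μ (a + b) k l + a := le_self_add
        _ ≤ l + b := hcmp
        _ ≤ l + (a + b) := by gcongr; exact le_add_self
    exact absurd hsucc (Order.lt_succ _).not_ge

theorem min_add_le_of_min_truncatedCondition_add_le (hμ : ℵ₀ ≤ μ) (hd : a + b = d)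
    (h : min (truncatedCondition μ d k l + a) μ ≤ truncatedCondition μ d l k + b) :
    min (k + a) μ ≤ l + b := by
  subst hd
  rcases le_or_gt μ (a + b) with hd | hd
  · rw [truncatedCondition_eq_zero_of_le hd, truncatedCondition_eq_zero_of_le hd, zero_add,
      zero_add] at h
    exact min_add_le_add_of_min_le hμ hd h
  · exact min_add_le_of_min_truncatedCondition_add_le_of_lt hd h

end truncatedCondition

theorem CondMuUnfriendly.of_truncatedCondition {V : Type u} {G : SimpleGraph V}
    {C : V → Cardinal.{u} × Cardinal.{u}} {μ : Cardinal.{u}} {π : V → Fin 2} (hμ : ℵ₀ ≤ μ)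
    (hπ : CondMuUnfriendly G (fun x =>
      (truncatedCondition μ #(G.neighborSet x) (C x).1 (C x).2,
        truncatedCondition μ #(G.neighborSet x) (C x).2 (C x).1)) μ π) :
    CondMuUnfriendly G C μ π := by
  rw [condMuUnfriendly_iff_min_le] at hπ ⊢
  intro x
  have hsum : #{y : V // G.Adj x y ∧ π y = 0} + #{y : V // G.Adj x y ∧ π y = 1} =
      #(G.neighborSet x) := mk_and_eq_zero_add_mk_and_eq_one (G.Adj x) π
  exact ⟨fun h₀ => min_add_le_of_min_truncatedCondition_add_le hμ hsum ((hπ x).1 h₀),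
    fun h₁ => min_add_le_of_min_truncatedCondition_add_le hμ ((add_comm _ _).trans hsum)
      ((hπ x).2 h₁)⟩

theorem stmt2_general {V : Type u} (G : SimpleGraph V) (C : V → Cardinal.{u} × Cardinal.{u})
    {μ : Cardinal.{u}} (hμ : Order.IsSuccLimit μ) :
    ∃ κ ℓ : V → Cardinal.{u},
      (∀ x : V, κ x < μ ∧ ℓ x < μ) ∧
      (∀ x : V, μ ≤ #(G.neighborSet x) → κ x = 0 ∧ ℓ x = 0) ∧
      ∀ π : V → Fin 2,
        CondMuUnfriendly G (fun x => (κ x, ℓ x)) μ π → CondMuUnfriendly G C μ π :=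
  ⟨fun x => truncatedCondition μ #(G.neighborSet x) (C x).1 (C x).2,
    fun x => truncatedCondition μ #(G.neighborSet x) (C x).2 (C x).1,
    fun _ => ⟨truncatedCondition_lt hμ, truncatedCondition_lt hμ⟩,
    fun _ hx => ⟨truncatedCondition_eq_zero_of_le hx, truncatedCondition_eq_zero_of_le hx⟩,
    fun _ => .of_truncatedCondition (aleph0_le_of_isSuccLimit hμ)⟩

theorem stmt2 {V : Type u} (G : SimpleGraph V) (C : V → Cardinal.{u} × Cardinal.{u}) :
    ∃ C' : V → ℕ × ℕ,
      (∀ x : V, (G.neighborSet x).Infinite → C' x = (0, 0)) ∧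
      ∀ π : V → Fin 2,
        CondMuUnfriendly G (fun x => (((C' x).1 : Cardinal.{u}), ((C' x).2 : Cardinal.{u}))) ℵ₀ π →
        CondMuUnfriendly G C ℵ₀ π := by
  obtain ⟨κ, ℓ, hfin, hzero, h⟩ := stmt2_general G C isSuccLimit_aleph0
  lift κ to V → ℕ using fun x => (hfin x).1
  lift ℓ to V → ℕ using fun x => (hfin x).2
  exact ⟨fun x => (κ x, ℓ x), fun x hx => by simpa using hzero x (infinite_iff.1 hx.to_subtype), h⟩
end

section
/- Let Γ=(G,𝒞) be a graph with conditions, G=(V,E). Suppose that every countable graph with finite conditions Δ=(H,𝒟), where H=(W,F) is an induced subgraph of G on a vertex set W with W ∩ 𝓘(G) = ∅, has an unfriendly partition. Then Γ has an ω-unfriendly partition. -/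
open Cardinal

universe u

/-- `𝓘(G)`: the largest subset `W` of the vertex set such that each element of `W` has
infinitely many neighbours in `W` (the union of all such subsets). -/
def calI {V : Type u} (G : SimpleGraph V) : Set V :=
  ⋃₀ {W : Set V | ∀ x ∈ W, (G.neighborSet x ∩ W).Infinite}

/-- `π` is an unfriendly partition of the graph with conditions `(G, C)`. -/
def CondUnfriendly {V : Type u} (G : SimpleGraph V) (C : V → Cardinal.{u} × Cardinal.{u})
    (π : V → Fin 2) : Prop :=
  ∀ x : V,
    (π x = 0 →
      (C x).1 + #{y : V // G.Adj x y ∧ π y = 0} ≤ (C x).2 + #{y : V // G.Adj x y ∧ π y = 1}) ∧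
    (π x = 1 →
      (C x).2 + #{y : V // G.Adj x y ∧ π y = 1} ≤ (C x).1 + #{y : V // G.Adj x y ∧ π y = 0})

/-!
A partial colouring is *stable* if every coloured vertex will meet its `ℵ₀`-unfriendliness condition
however the colouring is extended. By Zorn's lemma there is a maximal stable colouring, and at a
vertex that it leaves uncoloured both weighted numbers of coloured neighbours are finite, since
otherwise the vertex could be given the opposite colour.

* If some vertex of `𝓘(G)` were uncoloured, a countable set of uncoloured vertices, each having
  infinitely many neighbours in that set, could be coloured so that each of its vertices sees both
  colours infinitely often.
* So the uncoloured vertices avoid `𝓘(G)`. Close one of them off to a countable uncoloured set `W`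
  that contains, for each of its vertices, all or infinitely many of the uncoloured neighbours.
  Absorbing the coloured neighbours into finite conditions on `W`, the hypothesis yields a colouring
  of `W` that stably extends the given one, a contradiction.
-/

namespace UnfriendlyPartition

open Function Set

section InfiniteSets

variable {ι κ α : Type*}

-- Hall's theorem for finite sets `t i ⊆ A i` of strictly increasing size along an enumeration.
theorem exists_injective_forall_mem_of_infinite [Countable ι] {A : ι → Set α}
    (hA : ∀ i, (A i).Infinite) : ∃ f : ι → α, Injective f ∧ ∀ i, f i ∈ A i := by
  classical
  obtain ⟨e, he⟩ := exists_injective_nat ι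
  choose t htA ht_card using fun i => (hA i).exists_subset_card_eq (e i + 1)
  suffices hall : ∀ s : Finset ι, s.card ≤ (s.biUnion t).card by
    obtain ⟨f, hf, hft⟩ := (Finset.all_card_le_biUnion_card_iff_exists_injective t).1 hall
    exact ⟨f, hf, fun i => htA i (hft i)⟩
  intro s
  obtain rfl | hs := s.eq_empty_or_nonempty
  · exact Nat.zero_le _
  obtain ⟨m, hm, hmax⟩ := s.exists_max_image e hs
  calc s.card = (s.image e).card := (Finset.card_image_of_injective s he).symm
    _ ≤ (Finset.range (e m + 1)).card := Finset.card_le_card <| Finset.image_subset_iff.2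
        fun i hi => Finset.mem_range_succ_iff.2 (hmax i hi)
    _ = (t m).card := by rw [Finset.card_range, ht_card]
    _ ≤ (s.biUnion t).card := Finset.card_le_card (Finset.subset_biUnion_of_mem t hm)

theorem exists_forall_infinite_inter_preimage [Countable ι] [Countable κ] [Nonempty κ]
    {A : ι → Set α} (hA : ∀ i, (A i).Infinite) :
    ∃ c : α → κ, ∀ i k, (A i ∩ c ⁻¹' {k}).Infinite := by
  obtain ⟨f, hf, hfA⟩ := exists_injective_forall_mem_of_infinite
    (A := fun p : ι × κ × ℕ => A p.1) fun p => hA p.1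
  refine ⟨extend f (fun p => p.2.1) fun _ => Classical.arbitrary κ, fun i k => ?_⟩
  refine infinite_of_injective_forall_mem (f := fun n : ℕ => f (i, k, n)) ?_ ?_
  · exact hf.comp fun m n hmn => by simpa using hmn
  · exact fun n => ⟨hfA (i, k, n), by simp [hf.extend_apply]⟩

theorem exists_countable_subset_infinite_or_eq (A : Set α) :
    ∃ S ⊆ A, S.Countable ∧ (S.Infinite ∨ S = A) := by
  obtain hA | hA := A.finite_or_infinite
  · exact ⟨A, Subset.rfl, hA.countable, .inr rfl⟩
  · obtain ⟨S, hSA, hS, hinf⟩ := hA.exists_subset_countable_infinite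
    exact ⟨S, hSA, hS, .inl hinf⟩

theorem exists_countable_superset_biUnion_subset {S : α → Set α} (hS : ∀ x, (S x).Countable)
    (x₀ : α) : ∃ W : Set α, W.Countable ∧ x₀ ∈ W ∧ ∀ x ∈ W, S x ⊆ W := by
  let step (T : Set α) : Set α := ⋃ x ∈ T, S x
  have step_countable (n : ℕ) : (step^[n] {x₀}).Countable := by
    induction n with
    | zero => exact countable_singleton x₀
    | succ n ih => rw [iterate_succ_apply']; exact ih.biUnion fun x _ => hS x
  refine ⟨⋃ n, step^[n] {x₀}, countable_iUnion step_countable, mem_iUnion.2 ⟨0, rfl⟩, ?_⟩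
  intro x hx
  obtain ⟨n, hn⟩ := mem_iUnion.1 hx
  refine Subset.trans ?_ (subset_iUnion _ (n + 1))
  rw [iterate_succ_apply']
  exact subset_biUnion_of_mem (u := S) hn

theorem exists_countable_mem_infinite_inter_or_subset (A : α → Set α) (x₀ : α) :
    ∃ W : Set α, W.Countable ∧ x₀ ∈ W ∧ ∀ x ∈ W, (A x ∩ W).Infinite ∨ A x ⊆ W := by
  choose S hSA hS_countable hS using fun x => exists_countable_subset_infinite_or_eq (A x)
  obtain ⟨W, hW, hx₀, hSW⟩ := exists_countable_superset_biUnion_subset hS_countable x₀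
  refine ⟨W, hW, hx₀, fun x hx => (hS x).imp ?_ ?_⟩
  · exact fun h => h.mono (subset_inter (hSA x) (hSW x hx))
  · exact fun h => h ▸ hSW x hx

end InfiniteSets

section Graph

variable {V : Type u} {G : SimpleGraph V}

theorem infinite_neighborSet_inter_calI {x : V} (hx : x ∈ calI G) :
    (G.neighborSet x ∩ calI G).Infinite := by
  obtain ⟨W, hW, hxW⟩ := hx
  exact (hW x hxW).mono (inter_subset_inter_right _ (subset_sUnion_of_mem hW))

variable (G) in
theorem exists_countable_subset_infinite_neighborSet_inter_or_subset
    {U : Set V} {x₀ : V} (hx₀ : x₀ ∈ U) :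
    ∃ W ⊆ U, W.Countable ∧ x₀ ∈ W ∧
      ∀ x ∈ W, (G.neighborSet x ∩ W).Infinite ∨ G.neighborSet x ∩ U ⊆ W := by
  obtain ⟨W, hW, hx₀W, h⟩ :=
    exists_countable_mem_infinite_inter_or_subset (fun x => G.neighborSet x ∩ U) x₀
  refine ⟨W ∩ U, inter_subset_right, hW.mono inter_subset_left, ⟨hx₀W, hx₀⟩, fun x hx => ?_⟩
  refine (h x hx.1).imp (fun hinf => ?_) fun hsub => subset_inter hsub inter_subset_right
  rwa [inter_comm W, ← inter_assoc]

end Graph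

section Load

variable {V : Type u} (G : SimpleGraph V) (C : V → Cardinal.{u} × Cardinal.{u})

/-- The cardinal attached to colour `a` in the unfriendliness condition at `x`: `κ_x` (for `a = 0`)
or `λ_x` (for `a = 1`) plus the number of neighbours of `x` coloured `a`. A partial colouring is
encoded by its colour classes `P 0` and `P 1`. -/
def load (P : Fin 2 → Set V) (x : V) (a : Fin 2) : Cardinal.{u} :=
  ![(C x).1, (C x).2] a + #↥(G.neighborSet x ∩ P a)

variable {G C} {P Q : Fin 2 → Set V} {x : V} {a : Fin 2}

theorem load_mono (h : P ≤ Q) : load G C P x a ≤ load G C Q x a :=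
  add_le_add_right (mk_le_mk_of_subset (inter_subset_inter_right _ (h a))) _

theorem load_eq_of_neighborSet_subset (h : P ≤ Q) (hQ : Pairwise (Disjoint on Q))
    (hx : G.neighborSet x ⊆ ⋃ b, P b) : load G C P x a = load G C Q x a := by
  suffices G.neighborSet x ∩ P a = G.neighborSet x ∩ Q a by rw [load, load, this]
  refine (inter_subset_inter_right _ (h a)).antisymm fun y hy => ⟨hy.1, ?_⟩
  obtain ⟨b, hb⟩ := mem_iUnion.1 (hx hy.1)
  obtain rfl : a = b := hQ.eq (not_disjoint_iff.2 ⟨y, hy.2, h b hb⟩)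
  exact hb

theorem aleph0_le_load_of_infinite (h : (G.neighborSet x ∩ P a).Infinite) :
    ℵ₀ ≤ load G C P x a :=
  le_add_of_le_right (infinite_iff.1 h.to_subtype)

theorem exists_aleph0_le_load (h : (G.neighborSet x ∩ ⋃ b, P b).Infinite) :
    ∃ b, ℵ₀ ≤ load G C P x b := by
  contrapose! h
  rw [inter_iUnion]
  exact finite_iUnion fun b => not_infinite.1 fun hb => (h b).not_ge (aleph0_le_load_of_infinite hb)

theorem load_preimage_zero (π : V → Fin 2) : load G C (fun a => π ⁻¹' {a}) x 0 =
    (C x).1 + #{y : V // G.Adj x y ∧ π y = 0} := rfl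

theorem load_preimage_one (π : V → Fin 2) : load G C (fun a => π ⁻¹' {a}) x 1 =
    (C x).2 + #{y : V // G.Adj x y ∧ π y = 1} := rfl

theorem condUnfriendly_iff {π : V → Fin 2} : CondUnfriendly G C π ↔
    ∀ x, load G C (fun a => π ⁻¹' {a}) x (π x) ≤ load G C (fun a => π ⁻¹' {a}) x (π x).rev := by
  refine forall_congr' fun x => ?_
  rw [← load_preimage_zero, ← load_preimage_one]
  obtain h | h : π x = 0 ∨ π x = 1 := by omega
  all_goals simp [h]

theorem condMuUnfriendly_iff {μ : Cardinal.{u}} {π : V → Fin 2} : CondMuUnfriendly G C μ π ↔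
    ∀ x, load G C (fun a => π ⁻¹' {a}) x (π x) ≤ load G C (fun a => π ⁻¹' {a}) x (π x).rev ∨
      μ ≤ load G C (fun a => π ⁻¹' {a}) x (π x).rev := by
  -- If `μ` is at most the opposite load and the first disjunct fails, both loads are at least `μ`.
  refine forall_congr' fun x => ?_
  rw [← load_preimage_zero, ← load_preimage_one]
  obtain h | h : π x = 0 ∨ π x = 1 := by omega
  · rw [h, show (0 : Fin 2).rev = 1 from rfl]
    grind
  · rw [h, show (1 : Fin 2).rev = 0 from rfl]
    grind

end Load

section Stable

variable {V : Type u} (G : SimpleGraph V) (C : V → Cardinal.{u} × Cardinal.{u})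

/-- A vertex `x` of colour `a` is settled by the partial colouring `P` if it is bound to satisfy its
`ℵ₀`-unfriendliness condition in every colouring extending `P`: either the opposite load is already
infinite, or all neighbours are coloured and the loads compare as required. -/
def Settled (P : Fin 2 → Set V) (x : V) (a : Fin 2) : Prop :=
  ℵ₀ ≤ load G C P x a.rev ∨
    G.neighborSet x ⊆ ⋃ b, P b ∧ load G C P x a ≤ load G C P x a.rev

/-- A partial colouring is stable if its colour classes are disjoint and settle all of their
vertices. -/
structure IsStable (P : Fin 2 → Set V) : Prop where
  pairwise_disjoint : Pairwise (Disjoint on P)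
  settled : ∀ a, ∀ x ∈ P a, Settled G C P x a

/-- The partial colouring extending `P` by a colouring `π` of `W`. -/
def extendBy {W : Set V} (P : Fin 2 → Set V) (π : W → Fin 2) (a : Fin 2) : Set V :=
  P a ∪ (↑) '' (π ⁻¹' {a})

variable {G C} {P Q : Fin 2 → Set V} {x : V} {a : Fin 2}

theorem Settled.mono (hx : Settled G C P x a) (h : P ≤ Q) (hQ : Pairwise (Disjoint on Q)) :
    Settled G C Q x a := by
  refine hx.imp (fun hinf => hinf.trans (load_mono h)) ?_
  rintro ⟨hsub, hle⟩
  refine ⟨hsub.trans (iUnion_mono h), ?_⟩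
  rwa [← load_eq_of_neighborSet_subset h hQ hsub, ← load_eq_of_neighborSet_subset h hQ hsub]

theorem Settled.of_load_le (hle : load G C P x a ≤ load G C P x a.rev)
    (h : (G.neighborSet x ∩ ⋃ b, P b).Infinite ∨ G.neighborSet x ⊆ ⋃ b, P b) :
    Settled G C P x a := by
  refine h.imp (fun hinf => ?_) fun hsub => ⟨hsub, hle⟩
  obtain ⟨b, hb⟩ := exists_aleph0_le_load (C := C) hinf
  obtain rfl | rfl : b = a ∨ b = a.rev := by grind [Fin.rev]
  · exact hb.trans hle
  · exact hb

theorem IsStable.exists_condMuUnfriendly (hP : IsStable G C P) (hcover : ⋃ a, P a = Set.univ) :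
    ∃ π : V → Fin 2, CondMuUnfriendly G C ℵ₀ π := by
  choose π hπ using fun x => mem_iUnion.1 (hcover.symm ▸ mem_univ x)
  have classes : P = fun a => π ⁻¹' {a} := by
    ext a x
    refine ⟨fun hx => ?_, fun hx => hx ▸ hπ x⟩
    exact hP.pairwise_disjoint.eq (not_disjoint_iff.2 ⟨x, hπ x, hx⟩)
  refine ⟨π, condMuUnfriendly_iff.2 fun x => ?_⟩
  rw [← classes]
  exact (hP.settled _ x (hπ x)).symm.imp_left And.right

variable (G C) in
theorem exists_maximal_isStable : ∃ P, Maximal (IsStable G C) P := by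
  refine zorn_le₀ {P | IsStable G C P} fun c hc hchain => ?_
  have mem_sSup {x a} : x ∈ sSup c a ↔ ∃ P ∈ c, x ∈ P a := by simp
  have hdisj : Pairwise (Disjoint on sSup c) := by
    intro a b hab
    refine disjoint_left.2 fun x hxa hxb => ?_
    obtain ⟨P, hP, hxP⟩ := mem_sSup.1 hxa
    obtain ⟨Q, hQ, hxQ⟩ := mem_sSup.1 hxb
    obtain hPQ | hQP := hchain.total hP hQ
    · exact disjoint_left.1 ((hc hQ).pairwise_disjoint hab) (hPQ a hxP) hxQ
    · exact disjoint_left.1 ((hc hP).pairwise_disjoint hab) hxP (hQP b hxQ)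
  refine ⟨sSup c, ⟨hdisj, fun a x hx => ?_⟩, fun P hP => le_sSup hP⟩
  obtain ⟨P, hP, hxP⟩ := mem_sSup.1 hx
  exact ((hc hP).settled a x hxP).mono (le_sSup hP) hdisj

section ExtendBy

variable {W : Set V} {π : W → Fin 2}

theorem le_extendBy : P ≤ extendBy P π := fun _ => subset_union_left

theorem coe_mem_extendBy (x : W) : (x : V) ∈ extendBy P π (π x) := .inr ⟨x, rfl, rfl⟩

theorem iUnion_extendBy : ⋃ a, extendBy P π a = (⋃ a, P a) ∪ W := by
  simp only [extendBy, iUnion_union_distrib, ← image_iUnion, ← preimage_iUnion, iUnion_of_singleton,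
    preimage_univ, image_univ, Subtype.range_coe]

theorem disjoint_image_val (hW : Disjoint W (⋃ a, P a)) (T : Set W) (a : Fin 2) :
    Disjoint (P a) ((↑) '' T) :=
  (hW.mono (Subtype.coe_image_subset W T) (subset_iUnion P a)).symm

theorem load_extendBy (hW : Disjoint W (⋃ a, P a)) (x : W) (a : Fin 2) :
    load G C (extendBy P π) x a =
      load (G.induce W) (fun y => (load G C P y 0, load G C P y 1)) (fun b => π ⁻¹' {b}) x a := by
  have hinter : G.neighborSet x ∩ (↑) '' (π ⁻¹' {a}) =
      (↑) '' ((G.induce W).neighborSet x ∩ π ⁻¹' {a}) := by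
    rw [inter_comm, ← image_inter_preimage, inter_comm]
    rfl
  have hcond : ![load G C P x 0, load G C P x 1] a = load G C P x a := by
    fin_cases a <;> rfl
  have hdisj := (disjoint_image_val hW (π ⁻¹' {a}) a).mono
    (inter_subset_right (s := G.neighborSet x)) (inter_subset_right (s := G.neighborSet x))
  rw [load, extendBy, inter_union_distrib_left, mk_union_of_disjoint hdisj, ← add_assoc, hinter,
    mk_image_eq Subtype.val_injective, load, hcond, load]

theorem pairwise_disjoint_extendBy (hP : Pairwise (Disjoint on P)) (hW : Disjoint W (⋃ a, P a)) :
    Pairwise (Disjoint on extendBy P π) := by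
  intro a b hab
  have himage : Disjoint (((↑) : W → V) '' (π ⁻¹' {a})) ((↑) '' (π ⁻¹' {b})) :=
    (disjoint_image_iff Subtype.val_injective).2 ((disjoint_singleton.2 hab).preimage π)
  exact ((hP hab).union_right (disjoint_image_val hW _ a)).union_left
    ((disjoint_image_val hW _ b).symm.union_right himage)

theorem IsStable.extendBy (hP : IsStable G C P) (hW : Disjoint W (⋃ a, P a))
    (hπ : ∀ x : W, Settled G C (extendBy P π) x (π x)) : IsStable G C (extendBy P π) := by
  have hdisj := pairwise_disjoint_extendBy (π := π) hP.pairwise_disjoint hW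
  refine ⟨hdisj, ?_⟩
  rintro a x (hx | ⟨y, rfl, rfl⟩)
  · exact (hP.settled a x hx).mono le_extendBy hdisj
  · exact hπ y

end ExtendBy

end Stable

section MaximalStable

variable {V : Type u} {G : SimpleGraph V} {C : V → Cardinal.{u} × Cardinal.{u}}
  {P : Fin 2 → Set V} {W : Set V} {x : V}

theorem eq_empty_of_settled_extendBy (hP : Maximal (IsStable G C) P) (hW : Disjoint W (⋃ a, P a))
    {π : W → Fin 2} (hπ : ∀ x : W, Settled G C (extendBy P π) x (π x)) : W = ∅ := by
  refine eq_empty_of_forall_notMem fun x hx => disjoint_left.1 hW hx (mem_iUnion.2 ⟨π ⟨x, hx⟩, ?_⟩)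
  exact hP.2 (hP.1.extendBy hW hπ) le_extendBy _ (coe_mem_extendBy ⟨x, hx⟩)

theorem load_lt_aleph0_of_notMem (hP : Maximal (IsStable G C) P) (hx : x ∉ ⋃ a, P a)
    (a : Fin 2) : load G C P x a < ℵ₀ := by
  by_contra! hinf
  refine singleton_ne_empty x
    (eq_empty_of_settled_extendBy hP (disjoint_singleton_left.2 hx) (π := fun _ => a.rev) ?_)
  rintro ⟨_, rfl⟩
  left
  rw [Fin.rev_rev]
  exact hinf.trans (load_mono le_extendBy)

theorem finite_neighborSet_inter_iUnion (hP : Maximal (IsStable G C) P) (hx : x ∉ ⋃ a, P a) :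
    (G.neighborSet x ∩ ⋃ a, P a).Finite := by
  by_contra hinf
  obtain ⟨a, ha⟩ := exists_aleph0_le_load (C := C) hinf
  exact (load_lt_aleph0_of_notMem hP hx a).not_ge ha

theorem eq_empty_of_infinite_neighborSet_inter (hP : Maximal (IsStable G C) P)
    (hW : Disjoint W (⋃ a, P a)) (hcount : W.Countable)
    (hinf : ∀ x ∈ W, (G.neighborSet x ∩ W).Infinite) : W = ∅ := by
  have := hcount.to_subtype
  have infinite_induce (x : W) : ((G.induce W).neighborSet x).Infinite := by
    refine Infinite.of_image (↑) ((hinf x x.2).mono ?_)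
    exact fun y hy => ⟨⟨y, hy.2⟩, hy.1, rfl⟩
  obtain ⟨π, hπ⟩ := exists_forall_infinite_inter_preimage (κ := Fin 2) infinite_induce
  refine eq_empty_of_settled_extendBy hP hW (π := π) fun x => .inl ?_
  rw [load_extendBy hW]
  exact aleph0_le_load_of_infinite (hπ x (π x).rev)

theorem calI_subset_iUnion (hP : Maximal (IsStable G C) P) : calI G ⊆ ⋃ a, P a := by
  intro x₀ hx₀
  by_contra hx₀P
  obtain ⟨W, hWsub, hcount, hx₀W, hW⟩ :=
    exists_countable_subset_infinite_neighborSet_inter_or_subset G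
      (U := calI G \ ⋃ a, P a) ⟨hx₀, hx₀P⟩
  refine (Set.nonempty_of_mem hx₀W).ne_empty (eq_empty_of_infinite_neighborSet_inter hP
    (disjoint_left.2 fun x hx => (hWsub hx).2) hcount fun x hx => ?_)
  refine (hW x hx).elim id fun hsub => ?_
  have hdiff := (infinite_neighborSet_inter_calI (hWsub hx).1).sdiff
    (finite_neighborSet_inter_iUnion hP (hWsub hx).2)
  exact hdiff.mono fun y hy => ⟨hy.1.1, hsub ⟨hy.1.1, hy.1.2, fun h => hy.2 ⟨hy.1.1, h⟩⟩⟩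

theorem eq_empty_of_condUnfriendly (hP : Maximal (IsStable G C) P) (hW : Disjoint W (⋃ a, P a))
    (hclosed : ∀ x ∈ W, (G.neighborSet x ∩ W).Infinite ∨ G.neighborSet x ∩ (⋃ a, P a)ᶜ ⊆ W)
    {π : W → Fin 2} (hπ : CondUnfriendly (G.induce W)
      (fun x => (load G C P x 0, load G C P x 1)) π) : W = ∅ := by
  refine eq_empty_of_settled_extendBy hP hW (π := π) fun x => .of_load_le ?_ ?_
  · simpa only [load_extendBy hW] using condUnfriendly_iff.1 hπ x
  · rw [iUnion_extendBy]
    refine (hclosed x x.2).imp ?_ fun hsub => ?_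
    · exact fun hinf => hinf.mono (inter_subset_inter_right _ subset_union_right)
    · rwa [← sdiff_eq, sdiff_subset_iff] at hsub

end MaximalStable

end UnfriendlyPartition

open UnfriendlyPartition

theorem stmt3 {V : Type u} (G : SimpleGraph V) (C : V → Cardinal.{u} × Cardinal.{u})
    (hyp : ∀ W : Set V, W.Countable → W ∩ calI G = ∅ →
      ∀ D : W → ℕ × ℕ, ∃ π : W → Fin 2,
        CondUnfriendly (G.induce W)
          (fun x => (((D x).1 : Cardinal.{u}), ((D x).2 : Cardinal.{u}))) π) :
    ∃ π : V → Fin 2, CondMuUnfriendly G C ℵ₀ π := by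
  obtain ⟨P, hP⟩ := exists_maximal_isStable G C
  refine hP.1.exists_condMuUnfriendly (Set.eq_univ_of_forall fun x₀ => ?_)
  by_contra hx₀
  obtain ⟨W, hWP, hcount, hx₀W, hclosed⟩ :=
    exists_countable_subset_infinite_neighborSet_inter_or_subset G (U := (⋃ a, P a)ᶜ) hx₀
  have hW : Disjoint W (⋃ a, P a) := Set.subset_compl_iff_disjoint_right.1 hWP
  obtain ⟨π, hπ⟩ := hyp W hcount (hW.mono_right (calI_subset_iUnion hP)).inter_eq
    fun x => (toNat (load G C P x 0), toNat (load G C P x 1))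
  have cast_load (x : W) (a : Fin 2) : (toNat (load G C P x a) : Cardinal) = load G C P x a :=
    cast_toNat_of_lt_aleph0 (load_lt_aleph0_of_notMem hP (hWP x.2) a)
  simp only [cast_load] at hπ
  exact (Set.nonempty_of_mem hx₀W).ne_empty (eq_empty_of_condUnfriendly hP hW hclosed hπ)
end

section
/- The following four properties are equivalent: (1) every graph with conditions has an ω-unfriendly partition; (2) every graph has an ω-unfriendly partition; (3) every countable graph has an unfriendly partition; (4) every countable graph having no nonempty induced subgraph in which every vertex has infinite degree has an unfriendly partition. -/
open Cardinal

universe u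

/-!
Condition (1) does not distinguish infinite cardinals, so a condition amounts to phantom neighbours
counted in `ℕ∞`. Give every vertex countably many of its neighbours: all of them if possible,
otherwise infinitely many. The closures of single vertices under this choice cut the graph into
well-ordered countable blocks that can be coloured one after the other. Neighbours coloured earlier
act as phantoms; neighbours coloured later are harmless, since a vertex that has any also has
infinitely many in its own and the earlier blocks, hence infinitely many of the opposite colour.

In a countable graph, colour the largest induced subgraph of infinite minimum degree so that every
vertex of it sees both colours infinitely often. On the remaining vertices phantom neighbours are
realised by actual ones of prescribed colour, supplied by attaching a ladder of twin vertices with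
forced alternating colours, and (4) applies.
-/

theorem fin_two_ne_iff_eq_add_one {a b : Fin 2} : a ≠ b ↔ a = b + 1 := by
  decide +revert

section ColorCount

variable {V W : Type*} {π ρ : V → Fin 2} {S T : Set V} {k : Fin 2 → ℕ∞} {c : Fin 2}

/-- The number of elements of `S` that `π` colours `c`, all infinite cardinals being identified. -/
noncomputable def colorCount (π : V → Fin 2) (S : Set V) (c : Fin 2) : ℕ∞ :=
  (S ∩ π ⁻¹' {c}).encard

theorem colorCount_congr (h : Set.EqOn π ρ S) (c : Fin 2) :
    colorCount π S c = colorCount ρ S c :=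
  congrArg Set.encard (h.inter_preimage_eq {c})

theorem colorCount_mono (h : S ⊆ T) (c : Fin 2) : colorCount π S c ≤ colorCount π T c :=
  Set.encard_le_encard (Set.inter_subset_inter_left _ h)

theorem colorCount_eq_encard (h : ∀ y ∈ S, π y = c) : colorCount π S c = S.encard :=
  congrArg Set.encard (Set.inter_eq_left.2 h)

theorem colorCount_union (h : Disjoint S T) (c : Fin 2) :
    colorCount π (S ∪ T) c = colorCount π S c + colorCount π T c := by
  rw [colorCount, Set.union_inter_distrib_right]
  exact Set.encard_union_eq (h.mono Set.inter_subset_left Set.inter_subset_left)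

theorem colorCount_image {f : W → V} (hf : f.Injective) (S : Set W) (c : Fin 2) :
    colorCount π (f '' S) c = colorCount (π ∘ f) S c := by
  rw [colorCount, ← Set.image_inter_preimage, hf.encard_image, ← Set.preimage_comp, colorCount]

theorem colorCount_add_colorCount_add_one (π : V → Fin 2) (S : Set V) (c : Fin 2) :
    colorCount π S c + colorCount π S (c + 1) = S.encard := by
  have hcompl : S ∩ π ⁻¹' {c + 1} = S \ π ⁻¹' {c} := by
    ext y
    simp [← fin_two_ne_iff_eq_add_one]
  rw [colorCount, colorCount, hcompl, add_comm, Set.encard_sdiff_add_encard_inter]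

/-- `c` is an unfriendly colour for a vertex whose neighbourhood consists of `S`, coloured by `π`,
and of `k d` phantom neighbours of each colour `d`. Cardinals are compared in `ℕ∞`, which is
what makes the notion an `ω`-unfriendly one. -/
def UnfriendlyColor (k : Fin 2 → ℕ∞) (π : V → Fin 2) (S : Set V) (c : Fin 2) : Prop :=
  k c + colorCount π S c ≤ k (c + 1) + colorCount π S (c + 1)

theorem UnfriendlyColor.congr (h : UnfriendlyColor k π S c) (hπ : Set.EqOn π ρ S) :
    UnfriendlyColor k ρ S c := by
  simpa only [UnfriendlyColor, colorCount_congr hπ] using h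

theorem UnfriendlyColor.mono_of_infinite (h : UnfriendlyColor k π S c) (hS : S.Infinite)
    (hST : S ⊆ T) : UnfriendlyColor k π T c := by
  have htop : k (c + 1) + colorCount π S (c + 1) = ⊤ := by
    have htotal := colorCount_add_colorCount_add_one π S c
    rw [hS.encard_eq, ENat.add_eq_top] at htotal
    rcases htotal with hc | hc
    · rw [UnfriendlyColor, hc, add_top] at h
      exact top_le_iff.1 h
    · rw [hc, add_top]
  calc k c + colorCount π T c ≤ k (c + 1) + colorCount π S (c + 1) := htop ▸ le_top
    _ ≤ k (c + 1) + colorCount π T (c + 1) := by gcongr; exact colorCount_mono hST _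

theorem UnfriendlyColor.ne_of_encard_lt {d : Fin 2} (h : UnfriendlyColor 0 π (S ∪ T) d)
    (hS : ∀ y ∈ S, π y = c) (hTS : T.encard < S.encard) : d ≠ c := by
  rintro rfl
  simp only [UnfriendlyColor, Pi.zero_apply, zero_add] at h
  refine hTS.not_ge ?_
  calc S.encard = colorCount π S d := (colorCount_eq_encard hS).symm
    _ ≤ colorCount π (S ∪ T) d := colorCount_mono Set.subset_union_left d
    _ ≤ colorCount π (S ∪ T) (d + 1) := h
    _ ≤ T.encard := Set.encard_le_encard fun y ⟨hy, hyd⟩ =>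
      hy.resolve_left fun hyS => fin_two_ne_iff_eq_add_one.2 hyd (hS y hyS)

theorem UnfriendlyColor.eq_of_odd_ncard {d : Fin 2}
    (hc : UnfriendlyColor 0 π S c) (hd : UnfriendlyColor 0 π S d) (hS : Odd S.ncard) :
    c = d := by
  by_contra hcd
  obtain rfl : d = c + 1 := fin_two_ne_iff_eq_add_one.1 (Ne.symm hcd)
  have hcc : c + 1 + 1 = c := (fin_two_ne_iff_eq_add_one.1 hcd).symm
  simp only [UnfriendlyColor, Pi.zero_apply, zero_add, hcc] at hc hd
  have hfin : S.Finite := Set.finite_of_ncard_ne_zero hS.pos.ne'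
  have htotal := colorCount_add_colorCount_add_one π S c
  rw [← hc.antisymm hd, colorCount, ← (hfin.inter_of_left _).cast_ncard_eq,
    ← hfin.cast_ncard_eq] at htotal
  exact Nat.not_even_iff_odd.2 hS ⟨_, (by exact_mod_cast htotal.symm)⟩

end ColorCount

section Phantom

variable {V : Type*}

/-- `π` is an `ω`-unfriendly partition of `G` with conditions `K`, where `K x c : ℕ∞` counts the
phantom neighbours of colour `c` at `x`. -/
def PhantomUnfriendly (G : SimpleGraph V) (K : V → Fin 2 → ℕ∞) (π : V → Fin 2) : Prop :=
  ∀ x, UnfriendlyColor (K x) π (G.neighborSet x) (π x)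

/-- `G` has an `ω`-unfriendly partition for every choice of conditions. -/
def PhantomPartitionable (G : SimpleGraph V) : Prop :=
  ∀ K, ∃ π, PhantomUnfriendly G K π

end Phantom

section Translation

variable {V : Type u} {G : SimpleGraph V} {π : V → Fin 2}

theorem toENat_le_toENat_iff {a b : Cardinal.{u}} :
    toENat a ≤ toENat b ↔ a ≤ b ∨ ℵ₀ ≤ a ∧ ℵ₀ ≤ b := by
  rcases lt_or_ge b ℵ₀ with hb | hb
  · rw [toENat_le_iff_of_lt_aleph0 hb]
    exact (or_iff_left fun h => hb.not_ge h.2).symm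
  · simp only [toENat_eq_top.2 hb, le_top, hb, and_true, true_iff]
    exact (le_total a ℵ₀).imp_left (·.trans hb)

theorem toENat_mk_adj_and_color (G : SimpleGraph V) (π : V → Fin 2) (x : V) (c : Fin 2) :
    toENat #{y : V // G.Adj x y ∧ π y = c} = colorCount π (G.neighborSet x) c :=
  rfl

theorem PhantomUnfriendly.condMuUnfriendly {C : V → Cardinal.{u} × Cardinal.{u}}
    (h : PhantomUnfriendly G (fun x => ![toENat (C x).1, toENat (C x).2]) π) :
    CondMuUnfriendly G C ℵ₀ π := by
  intro x
  have hx := h x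
  simp only [UnfriendlyColor, ← toENat_mk_adj_and_color] at hx
  constructor <;> intro hc <;> rw [hc] at hx
  · rwa [← toENat_le_toENat_iff, map_add, map_add]
  · rwa [and_comm, ← toENat_le_toENat_iff, map_add, map_add]

theorem CondMuUnfriendly.kUnfriendlyPartition {μ : Cardinal.{u}}
    (h : CondMuUnfriendly G (fun _ => (0, 0)) μ π) : KUnfriendlyPartition G μ π := by
  intro x
  have hx := h x
  simp only [zero_add] at hx
  simp only [fin_two_ne_iff_eq_add_one]
  obtain hc | hc : π x = 0 ∨ π x = 1 := by generalize π x = c; decide +revert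
  · rw [hc]
    exact (hx.1 hc).symm.imp_left And.right
  · rw [hc]
    exact (hx.2 hc).symm.imp_left And.left

theorem KUnfriendlyPartition.unfriendlyPartition [Countable V]
    (h : KUnfriendlyPartition G ℵ₀ π) : UnfriendlyPartition G π :=
  fun x => (h x).elim mk_le_aleph0.trans id

theorem UnfriendlyPartition.add_const (h : UnfriendlyPartition G π) (c : Fin 2) :
    UnfriendlyPartition G fun x => π x + c := by
  simpa only [UnfriendlyPartition, ne_eq, add_left_inj] using h

theorem UnfriendlyPartition.phantomUnfriendly_zero (h : UnfriendlyPartition G π) :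
    PhantomUnfriendly G 0 π := by
  intro x
  have hx : toENat #{y : V // G.Adj x y ∧ π y = π x} ≤ toENat #{y : V // G.Adj x y ∧ π y ≠ π x} :=
    OrderHomClass.mono toENat (h x)
  simpa only [UnfriendlyColor, fin_two_ne_iff_eq_add_one, toENat_mk_adj_and_color, Pi.zero_apply,
    zero_add] using hx

end Translation

section Gluing

variable {V : Type*} {G : SimpleGraph V}

theorem exists_forall_of_forall_exists_extension {ι α : Type*} [PartialOrder ι] [WellFoundedLT ι]
    [Nonempty α] {r : V → ι} {P : ι → (V → α) → Prop}
    (hlocal : ∀ i π ρ, Set.EqOn π ρ (r ⁻¹' Set.Iic i) → P i π → P i ρ)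
    (hextend : ∀ i π, ∃ ρ, Set.EqOn π ρ (r ⁻¹' Set.Iio i) ∧ P i ρ) :
    ∃ π, ∀ i, P i π := by
  classical
  choose E hE hP using hextend
  let stage : ι → V → α := wellFounded_lt.fix fun i previous =>
    E i fun v => if h : r v < i then previous (r v) h v else Classical.arbitrary α
  let below (i : ι) (v : V) : α := if r v < i then stage (r v) v else Classical.arbitrary α
  have hstage (i : ι) : stage i = E i (below i) :=
    wellFounded_lt.fix_eq _ i
  refine ⟨fun v => stage (r v) v, fun i => hlocal i (stage i) _ ?_ (hstage i ▸ hP i _)⟩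
  intro v hv
  rcases (Set.mem_Iic.1 hv).eq_or_lt with rfl | hlt
  · rfl
  · rw [hstage i, ← hE i _ hlt]
    exact if_pos hlt

theorem image_neighborSet_induce {S : Set V} (x : S) :
    Subtype.val '' (G.induce S).neighborSet x = G.neighborSet x ∩ S := by
  ext y
  simp [and_comm]

theorem PhantomPartitionable.exists_extension {F L : Set V}
    (hF : PhantomPartitionable (G.induce F)) (hFL : Disjoint F L) (K : V → Fin 2 → ℕ∞)
    (π : V → Fin 2) :
    ∃ ρ, Set.EqOn π ρ Fᶜ ∧
      ∀ x ∈ F, UnfriendlyColor (K x) ρ (G.neighborSet x ∩ (F ∪ L)) (ρ x) := by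
  -- The neighbours in `L`, already coloured, become phantom neighbours in `F`.
  obtain ⟨σ, hσ⟩ := hF fun x c => K x c + colorCount π (G.neighborSet x ∩ L) c
  let ρ := Function.extend Subtype.val σ π
  have hρF (x : F) : ρ x = σ x := Subtype.val_injective.extend_apply σ π x
  have hρπ : Set.EqOn π ρ Fᶜ := fun x hx =>
    (Function.extend_apply' σ π x fun ⟨y, hy⟩ => hx (hy ▸ y.2)).symm
  refine ⟨ρ, hρπ, fun x hx => ?_⟩
  have hsplit : G.neighborSet x ∩ (F ∪ L) =
      Subtype.val '' (G.induce F).neighborSet ⟨x, hx⟩ ∪ G.neighborSet x ∩ L := by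
    rw [image_neighborSet_induce, Set.inter_union_distrib_left]
  have hdisj : Disjoint (Subtype.val '' (G.induce F).neighborSet ⟨x, hx⟩)
      (G.neighborSet x ∩ L) :=
    hFL.mono (Subtype.coe_image_subset _ _) Set.inter_subset_right
  have hcount (c : Fin 2) : K x c + colorCount ρ (G.neighborSet x ∩ (F ∪ L)) c =
      K x c + colorCount π (G.neighborSet x ∩ L) c +
        colorCount σ ((G.induce F).neighborSet ⟨x, hx⟩) c := by
    have hL : Set.EqOn π ρ (G.neighborSet x ∩ L) := fun y hy =>
      hρπ (hFL.subset_compl_left hy.2)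
    rw [hsplit, colorCount_union hdisj, colorCount_image Subtype.val_injective,
      funext (f := ρ ∘ Subtype.val) hρF, ← colorCount_congr hL]
    ring
  simpa only [UnfriendlyColor, hcount, hρF ⟨x, hx⟩] using hσ ⟨x, hx⟩

theorem phantomPartitionable_of_rank {ι : Type*} [LinearOrder ι] [WellFoundedLT ι] (r : V → ι)
    (hfiber : ∀ i, PhantomPartitionable (G.induce (r ⁻¹' {i})))
    (hr : ∀ x, G.neighborSet x ⊆ r ⁻¹' Set.Iic (r x) ∨
      (G.neighborSet x ∩ r ⁻¹' Set.Iic (r x)).Infinite) :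
    PhantomPartitionable G := by
  intro K
  obtain ⟨π, hπ⟩ : ∃ π : V → Fin 2, ∀ i, ∀ x ∈ r ⁻¹' {i},
      UnfriendlyColor (K x) π (G.neighborSet x ∩ r ⁻¹' Set.Iic i) (π x) := by
    refine exists_forall_of_forall_exists_extension (r := r) ?_ fun i π => ?_
    · intro i π ρ hπρ hπ x hx
      rw [← hπρ (Set.mem_Iic.2 (Set.mem_singleton_iff.1 hx).le)]
      exact (hπ x hx).congr (hπρ.mono Set.inter_subset_right)
    · have hdisj : Disjoint (r ⁻¹' {i}) (r ⁻¹' Set.Iio i) :=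
        Disjoint.preimage r (Set.disjoint_singleton_left.2 (lt_irrefl i))
      obtain ⟨ρ, hπρ, hρ⟩ := (hfiber i).exists_extension hdisj K π
      refine ⟨ρ, hπρ.mono hdisj.subset_compl_left, ?_⟩
      rwa [← Set.preimage_union, Set.union_comm, Set.Iio_union_right] at hρ
  refine ⟨π, fun x => ?_⟩
  rcases hr x with hlower | hinf
  · simpa only [Set.inter_eq_left.2 hlower] using hπ (r x) x rfl
  · exact (hπ (r x) x rfl).mono_of_infinite hinf Set.inter_subset_left

end Gluing

section CountableBlocks

variable {V : Type*} {G : SimpleGraph V}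

theorem exists_rank_with_countable_fibers {ι : Type*} [Countable ι] (s : V → ι → V) :
    ∃ (_ : LinearOrder V) (_ : WellFoundedLT V) (r : V → V),
      (∀ i, (r ⁻¹' {i}).Countable) ∧ ∀ x n, r (s x n) ≤ r x := by
  obtain ⟨_, _⟩ := exists_wellFoundedLT V
  let closure (x : V) : Set V := Set.range fun path : List ι => path.foldl s x
  have hself (x : V) : x ∈ closure x := ⟨[], rfl⟩
  have hstep {x y : V} (n : ι) : y ∈ closure x → s y n ∈ closure x := by
    rintro ⟨path, rfl⟩
    exact ⟨path ++ [n], List.foldl_concat ..⟩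
  have hwf : WellFounded ((· < ·) : V → V → Prop) := wellFounded_lt
  let r (y : V) : V := hwf.min {x | y ∈ closure x} ⟨y, hself y⟩
  have hr (y : V) : y ∈ closure (r y) := hwf.min_mem {x | y ∈ closure x} _
  have hle (x : V) (n : ι) : r (s x n) ≤ r x :=
    hwf.min_le (s := {y | s x n ∈ closure y}) (hstep n (hr x))
  refine ⟨_, ‹_›, r, fun i => ?_, hle⟩
  refine (Set.countable_range fun path : List ι => path.foldl s i).mono ?_
  rintro y rfl
  exact hr y

theorem exists_seq_range_inter_infinite_or_subset [Nonempty V] (S : Set V) :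
    ∃ s : ℕ → V, S ⊆ Set.range s ∨ (S ∩ Set.range s).Infinite := by
  by_cases hS : S.Countable
  · obtain ⟨s, hs⟩ := Set.countable_iff_exists_subset_range.1 hS
    exact ⟨s, Or.inl hs⟩
  · let e := Set.Infinite.natEmbedding S fun hfin => hS hfin.countable
    refine ⟨fun n => e n, Or.inr ?_⟩
    rw [Set.inter_eq_right.2 (Set.range_subset_iff.2 fun n => (e n).2)]
    exact Set.infinite_range_of_injective (Subtype.val_injective.comp e.injective)

theorem phantomPartitionable_of_countable_induce
    (h : ∀ S : Set V, S.Countable → PhantomPartitionable (G.induce S)) :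
    PhantomPartitionable G := by
  choose s hs using fun x : V =>
    have : Nonempty V := ⟨x⟩
    exists_seq_range_inter_infinite_or_subset (G.neighborSet x)
  obtain ⟨_, _, r, hcountable, hr⟩ := exists_rank_with_countable_fibers s
  have hrange (x : V) : Set.range (s x) ⊆ r ⁻¹' Set.Iic (r x) := Set.range_subset_iff.2 (hr x)
  refine phantomPartitionable_of_rank r (fun i => h _ (hcountable i)) fun x => ?_
  exact (hs x).imp (·.trans (hrange x)) (·.mono (Set.inter_subset_inter_right _ (hrange x)))

end CountableBlocks

section InfiniteDegree

variable {V : Type*} {G : SimpleGraph V}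

theorem exists_injective_forall_mem_of_infinite {ι α : Type*} [Countable ι] {A : ι → Set α}
    (hA : ∀ i, (A i).Infinite) : ∃ f : ι → α, f.Injective ∧ ∀ i, f i ∈ A i := by
  classical
  obtain ⟨code, hcode⟩ := Countable.exists_injective_nat ι
  choose t htA htcard using fun i => (hA i).exists_subset_card_eq (code i + 1)
  -- Hall's condition: the index of largest code in `s` already contributes enough elements.
  have hall (s : Finset ι) : s.card ≤ (s.biUnion t).card := by
    rcases s.eq_empty_or_nonempty with rfl | hs
    · simp
    obtain ⟨j, hj, hmax⟩ := s.exists_max_image code hs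
    calc s.card = (s.image code).card := (Finset.card_image_of_injective s hcode).symm
      _ ≤ (Finset.range (code j + 1)).card := Finset.card_le_card <| Finset.image_subset_iff.2
          fun i hi => Finset.mem_range_succ_iff.2 (hmax i hi)
      _ = (t j).card := by rw [Finset.card_range, htcard]
      _ ≤ (s.biUnion t).card := Finset.card_le_card (Finset.subset_biUnion_of_mem t hj)
  obtain ⟨f, hf, hft⟩ := (Finset.all_card_le_biUnion_card_iff_exists_injective t).1 hall
  exact ⟨f, hf, fun i => htA i (hft i)⟩

theorem exists_coloring_forall_infinite {ι α κ : Type*} [Countable ι] [Countable κ] [Nonempty κ]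
    {A : ι → Set α} (hA : ∀ i, (A i).Infinite) :
    ∃ π : α → κ, ∀ i c, (A i ∩ π ⁻¹' {c}).Infinite := by
  obtain ⟨f, hf, hfA⟩ :=
    exists_injective_forall_mem_of_infinite (A := fun j : ι × κ × ℕ => A j.1) fun j => hA j.1
  refine ⟨Function.extend f (fun j => j.2.1) fun _ => Classical.arbitrary κ, fun i c => ?_⟩
  have hinj : Function.Injective fun n : ℕ => f (i, c, n) := fun m n hmn => by
    simpa using hf hmn
  refine (Set.infinite_range_of_injective hinj).mono ?_
  rintro _ ⟨n, rfl⟩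
  exact ⟨hfA (i, c, n), hf.extend_apply _ _ (i, c, n)⟩

theorem exists_pairwise_disjoint_colorCount_eq {α : Type*} [Countable V] {π : α → Fin 2}
    {S : Set α} (hS : ∀ c, (S ∩ π ⁻¹' {c}).Infinite) (K : V → Fin 2 → ℕ∞) :
    ∃ A : V → Set α, Pairwise (Function.onFun Disjoint A) ∧ (∀ x, A x ⊆ S) ∧
      ∀ x c, colorCount π (A x) c = K x c := by
  rcases isEmpty_or_nonempty V with _ | _
  · exact ⟨isEmptyElim, isEmptyElim, isEmptyElim, isEmptyElim⟩
  obtain ⟨owner, howner⟩ := exists_coloring_forall_infinite (κ := V) hS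
  choose T hT hcard using fun x c =>
    Set.exists_subset_encard_eq (le_top.trans_eq (howner c x).encard_eq.symm : K x c ≤ _)
  refine ⟨fun x => ⋃ c, T x c, fun x y hxy => ?_, fun x => ?_, fun x c => ?_⟩
  · simp only [Function.onFun, Set.disjoint_left, Set.mem_iUnion]
    rintro a ⟨c, hc⟩ ⟨d, hd⟩
    exact hxy ((hT x c hc).2.symm.trans (hT y d hd).2)
  · exact Set.iUnion_subset fun c a ha => (hT x c ha).1.1
  · have hcolor : (⋃ d, T x d) ∩ π ⁻¹' {c} = T x c := by
      refine Set.Subset.antisymm ?_ fun a ha => ⟨Set.mem_iUnion_of_mem c ha, (hT x c ha).1.2⟩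
      rintro a ⟨ha, rfl⟩
      obtain ⟨d, hd⟩ := Set.mem_iUnion.1 ha
      obtain rfl : π a = d := (hT x d hd).1.2
      exact hd
    rw [colorCount, hcolor, hcard]

theorem phantomPartitionable_of_infinite_neighborSet [Countable V]
    (h : ∀ x, (G.neighborSet x).Infinite) : PhantomPartitionable G := by
  intro K
  obtain ⟨π, hπ⟩ := exists_coloring_forall_infinite (κ := Fin 2) h
  refine ⟨π, fun x => ?_⟩
  have htop (c : Fin 2) : colorCount π (G.neighborSet x) c = ⊤ := (hπ x c).encard_eq
  simp only [UnfriendlyColor, htop, add_top, le_refl]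

/-- No nonempty induced subgraph of `G` has all its degrees infinite. -/
def NoInfiniteDegreeSubgraph (G : SimpleGraph V) : Prop :=
  ∀ W : Set V, (∀ x ∈ W, (G.neighborSet x ∩ W).Infinite) → W = ∅

theorem NoInfiniteDegreeSubgraph.of_embedding {W : Type*} {H : SimpleGraph W}
    (hG : NoInfiniteDegreeSubgraph G) (f : G ↪g H)
    (hfin : ∀ w ∉ Set.range f, (H.neighborSet w).Finite) : NoInfiniteDegreeSubgraph H := by
  intro S hS
  have hrange : S ⊆ Set.range f := fun w hw => by
    by_contra hwf
    exact hS w hw ((hfin w hwf).inter_of_left S)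
  have hpreimage : f ⁻¹' S = ∅ := hG _ fun x hx => by
    refine Set.Infinite.of_image f ((hS (f x) hx).mono ?_)
    rintro _ ⟨hadj, hyS⟩
    obtain ⟨y, rfl⟩ := hrange hyS
    exact ⟨y, ⟨f.map_adj_iff.1 hadj, hyS⟩, rfl⟩
  rw [← Set.image_preimage_eq_of_subset hrange, hpreimage, Set.image_empty]

/-- The vertex set of the largest induced subgraph of `G` in which every vertex has infinite
degree. -/
def infiniteDegreePart (G : SimpleGraph V) : Set V :=
  ⋃₀ {W | ∀ x ∈ W, (G.neighborSet x ∩ W).Infinite}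

theorem infinite_neighborSet_inter_infiniteDegreePart {x : V} (hx : x ∈ infiniteDegreePart G) :
    (G.neighborSet x ∩ infiniteDegreePart G).Infinite := by
  obtain ⟨W, hW, hxW⟩ := hx
  exact (hW x hxW).mono (Set.inter_subset_inter_right _ (Set.subset_sUnion_of_mem hW))

theorem noInfiniteDegreeSubgraph_induce_compl_infiniteDegreePart :
    NoInfiniteDegreeSubgraph (G.induce (infiniteDegreePart G)ᶜ) := by
  intro W hW
  refine Set.eq_empty_of_forall_notMem fun x hx => x.2 ⟨Subtype.val '' W, ?_, x, hx, rfl⟩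
  rintro _ ⟨y, hy, rfl⟩
  refine ((hW y hy).image Subtype.val_injective.injOn).mono ?_
  rw [Set.image_inter Subtype.val_injective, image_neighborSet_induce]
  exact Set.inter_subset_inter_left _ Set.inter_subset_left

theorem phantomPartitionable_of_infinite_neighborSet_inter {M : Set V}
    (hM : PhantomPartitionable (G.induce M)) (hMc : PhantomPartitionable (G.induce Mᶜ))
    (hinf : ∀ x ∈ M, (G.neighborSet x ∩ M).Infinite) : PhantomPartitionable G := by
  -- In `Prop` we have `False < True`, so `M` is coloured first.
  refine phantomPartitionable_of_rank (· ∉ M) (fun i => ?_) fun x => ?_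
  · by_cases hi : i
    · have hfiber : (· ∉ M) ⁻¹' {i} = Mᶜ := by ext; simp [hi]
      rwa [hfiber]
    · have hfiber : (· ∉ M) ⁻¹' {i} = M := by ext; simp [hi]
      rwa [hfiber]
  · by_cases hx : x ∈ M
    · refine Or.inr ((hinf x hx).mono ?_)
      exact Set.inter_subset_inter_right _ fun y hy hyM => absurd hy hyM
    · exact Or.inl fun y _ _ => hx

theorem phantomPartitionable_of_compl_infiniteDegreePart [Countable V]
    (h : PhantomPartitionable (G.induce (infiniteDegreePart G)ᶜ)) : PhantomPartitionable G := by
  refine phantomPartitionable_of_infinite_neighborSet_inter ?_ h fun x =>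
    infinite_neighborSet_inter_infiniteDegreePart
  refine phantomPartitionable_of_infinite_neighborSet fun x =>
    Set.Infinite.of_image Subtype.val ?_
  rw [image_neighborSet_induce]
  exact infinite_neighborSet_inter_infiniteDegreePart x.2

end InfiniteDegree

section Ladder

theorem infinite_Ici_inter_preimage_ofNat (m : ℕ) (c : Fin 2) :
    (Set.Ici m ∩ Fin.ofNat 2 ⁻¹' {c}).Infinite := by
  refine Set.infinite_of_injective_forall_mem (f := fun k : ℕ => 2 * (k + m) + c) ?_ fun k => ?_
  · intro k l h
    simpa using h
  · refine ⟨show m ≤ _ by omega, Fin.ext ?_⟩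
    simp [Nat.mod_eq_of_lt c.isLt]

/-- The vertices of the graph `ladder G A`: those of `G`, a layer of `m` vertices for each `m`,
and a port for each layer. -/
inductive LadderVertex (V : Type u) : Type u
  | base (x : V)
  | layer (m : ℕ) (i : Fin m)
  | port (m : ℕ)

open LadderVertex

theorem LadderVertex.base_injective {V : Type u} : (base : V → LadderVertex V).Injective :=
  fun x y h => by cases h; rfl

theorem LadderVertex.port_injective {V : Type u} : (port : ℕ → LadderVertex V).Injective :=
  fun m n h => by cases h; rfl

instance {V : Type u} [Countable V] : Countable (LadderVertex V) := by
  let f : V ⊕ (Σ m, Fin m) ⊕ ℕ → LadderVertex V :=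
    Sum.elim base (Sum.elim (fun p => layer p.1 p.2) port)
  refine Function.Surjective.countable (f := f) ?_
  rintro (x | ⟨m, i⟩ | m)
  exacts [⟨.inl x, rfl⟩, ⟨.inr (.inl ⟨m, i⟩), rfl⟩, ⟨.inr (.inr m), rfl⟩]

theorem LadderVertex.layer_mem_range_layer {V : Type u} {m n : ℕ} {i : Fin n} :
    (layer n i : LadderVertex V) ∈ Set.range (layer m) ↔ n = m := by
  constructor
  · rintro ⟨j, h⟩
    cases h
    rfl
  · rintro rfl
    exact ⟨i, rfl⟩

theorem LadderVertex.encard_range_layer {V : Type u} (m : ℕ) :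
    (Set.range (layer m : Fin m → LadderVertex V)).encard = m := by
  have hinj : (layer m : Fin m → LadderVertex V).Injective := fun i j h => by cases h; rfl
  rw [← Set.image_univ, hinj.encard_image, Set.encard_univ, ENat.card_eq_coe_fintype_card,
    Fintype.card_fin]

/-- `G` with a ladder of layers attached, in which the port of layer `m` is joined to the vertices
`x` of `G` with `m ∈ A x`. The vertices of layer `m` are twins of odd degree `2 * m + 1` and layer
`m + 1` outnumbers all the other neighbours of layer `m`, so in an unfriendly partition the layers
are monochromatic and their colours alternate. -/
def ladder {V : Type u} (G : SimpleGraph V) (A : V → Set ℕ) : SimpleGraph (LadderVertex V) :=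
  SimpleGraph.fromRel fun
    | base x, base y => G.Adj x y
    | base x, port m => m ∈ A x
    | layer m _, port n => m = n
    | layer m _, layer n _ => n = m + 1
    | _, _ => False

variable {V : Type u} {G : SimpleGraph V} {A : V → Set ℕ} {π : LadderVertex V → Fin 2}

theorem neighborSet_ladder_base (x : V) :
    (ladder G A).neighborSet (base x) = base '' G.neighborSet x ∪ port '' A x := by
  ext (y | ⟨n, j⟩ | n)
  · simpa [ladder, G.adj_comm y x] using fun h : G.Adj x y => h.ne
  · simp [ladder]
  · simp [ladder]

theorem neighborSet_ladder_port (m : ℕ) :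
    (ladder G A).neighborSet (port m) = Set.range (layer m) ∪ base '' {x | m ∈ A x} := by
  ext (y | ⟨n, j⟩ | n)
  · simp [ladder]
  · simp [ladder, layer_mem_range_layer, -Set.mem_range]
  · simp [ladder]

theorem neighborSet_ladder_layer {m : ℕ} (i : Fin (m + 1)) :
    (ladder G A).neighborSet (layer (m + 1) i) =
      Set.range (layer (m + 2)) ∪ insert (port (m + 1)) (Set.range (layer m)) := by
  ext (y | ⟨n, j⟩ | n)
  · simp [ladder]
  · have hne : n = m + 2 ∨ m = n → ¬(m + 1 = n ∧ i ≍ j) := by omega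
    simpa [ladder, layer_mem_range_layer, -Set.mem_range, eq_comm (a := m)] using hne
  · simp [ladder, eq_comm]

theorem odd_ncard_neighborSet_ladder_layer {m : ℕ} (i : Fin (m + 1)) :
    Odd ((ladder G A).neighborSet (layer (m + 1) i)).ncard := by
  have hport : (port (m + 1) : LadderVertex V) ∉ Set.range (layer m) := by simp
  have hdisj : Disjoint (Set.range (layer (m + 2)) : Set (LadderVertex V))
      (insert (port (m + 1)) (Set.range (layer m))) := by
    rw [Set.disjoint_left, Set.forall_mem_range]
    intro j
    simp [layer_mem_range_layer, -Set.mem_range]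
  have hcard : ((ladder G A).neighborSet (layer (m + 1) i)).encard = (2 * (m + 1) + 1 : ℕ) := by
    rw [neighborSet_ladder_layer, Set.encard_union_eq hdisj, Set.encard_insert_of_notMem hport,
      encard_range_layer, encard_range_layer]
    push_cast
    ring
  rw [Set.ncard_def, hcard, ENat.toNat_natCast]
  exact odd_two_mul_add_one (m + 1)

theorem noInfiniteDegreeSubgraph_ladder (hG : NoInfiniteDegreeSubgraph G)
    (hA : Pairwise (Function.onFun Disjoint A)) : NoInfiniteDegreeSubgraph (ladder G A) := by
  let f : G ↪g ladder G A :=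
    { toFun := base
      inj' := base_injective
      map_rel_iff' := fun {x y} => by
        change base y ∈ (ladder G A).neighborSet (base x) ↔ G.Adj x y
        simp [neighborSet_ladder_base] }
  refine hG.of_embedding f ?_
  rintro (x | ⟨_ | m, i⟩ | m) hw
  · exact absurd ⟨x, rfl⟩ hw
  · exact i.elim0
  · rw [neighborSet_ladder_layer]
    exact (Set.finite_range _).union ((Set.finite_range _).insert _)
  · have hsub := subsingleton_setOfPred_mem_iff_pairwise_disjoint.2 hA
    rw [neighborSet_ladder_port]
    exact (Set.finite_range _).union ((hsub m).finite.image _)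

theorem PhantomUnfriendly.layer_eq_layer (hπ : PhantomUnfriendly (ladder G A) 0 π) {m : ℕ}
    (i j : Fin m) : π (layer m i) = π (layer m j) := by
  obtain _ | m := m
  · exact i.elim0
  have htwins : (ladder G A).neighborSet (layer (m + 1) j) =
      (ladder G A).neighborSet (layer (m + 1) i) := by
    simp only [neighborSet_ladder_layer]
  exact (hπ _).eq_of_odd_ncard (htwins ▸ hπ _) (odd_ncard_neighborSet_ladder_layer i)

theorem PhantomUnfriendly.layer_ne_layer_succ (hπ : PhantomUnfriendly (ladder G A) 0 π) {m : ℕ}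
    (i : Fin m) (j : Fin (m + 1)) : π (layer m i) ≠ π (layer (m + 1) j) := by
  obtain _ | m := m
  · exact i.elim0
  have hi := hπ (layer (m + 1) i)
  rw [neighborSet_ladder_layer] at hi
  refine hi.ne_of_encard_lt (Set.forall_mem_range.2 fun k => hπ.layer_eq_layer k j) ?_
  calc (insert (port (m + 1)) (Set.range (layer m)) : Set (LadderVertex V)).encard
      ≤ m + 1 := (Set.encard_insert_le _ _).trans_eq (by rw [encard_range_layer])
    _ < (m + 2 : ℕ) := by exact_mod_cast Nat.lt_succ_self (m + 1)
    _ = _ := (encard_range_layer (m + 2)).symm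

theorem PhantomUnfriendly.port_ne_layer (hπ : PhantomUnfriendly (ladder G A) 0 π)
    (hA : Pairwise (Function.onFun Disjoint A)) {m : ℕ} (hm : 2 ≤ m) (i : Fin m) :
    π (port m) ≠ π (layer m i) := by
  have hport := hπ (port m)
  rw [neighborSet_ladder_port] at hport
  refine hport.ne_of_encard_lt (Set.forall_mem_range.2 fun j => hπ.layer_eq_layer j i) ?_
  have hone : (base '' {x | m ∈ A x}).encard ≤ 1 := Set.encard_le_one_iff_subsingleton.2 <|
    (subsingleton_setOfPred_mem_iff_pairwise_disjoint.2 hA m).image base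
  calc (base '' {x | m ∈ A x}).encard ≤ 1 := hone
    _ < m := by exact_mod_cast hm
    _ = (Set.range (layer m)).encard := (encard_range_layer m).symm

theorem PhantomUnfriendly.port_succ (hπ : PhantomUnfriendly (ladder G A) 0 π)
    (hA : Pairwise (Function.onFun Disjoint A)) {m : ℕ} (hm : 2 ≤ m) :
    π (port (m + 1)) = π (port m) + 1 := by
  have hport := (hπ.port_ne_layer hA hm ⟨0, by omega⟩).symm
  have hlayer := hπ.layer_ne_layer_succ (⟨0, by omega⟩ : Fin m) 0
  have hport' := hπ.port_ne_layer hA (hm.trans m.le_succ) 0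
  rw [fin_two_ne_iff_eq_add_one] at hport hlayer hport'
  rw [hport', ← hlayer, hport]

theorem PhantomUnfriendly.port_eq_port_two_add (hπ : PhantomUnfriendly (ladder G A) 0 π)
    (hA : Pairwise (Function.onFun Disjoint A)) {m : ℕ} (hm : 2 ≤ m) :
    π (port m) = π (port 2) + Fin.ofNat 2 m := by
  induction m, hm using Nat.le_induction with
  | base => exact (add_zero _).symm
  | succ m hm ih => rw [hπ.port_succ hA hm, ih, add_assoc, Fin.ofNat_add, Fin.val_one]

theorem phantomPartitionable_of_noInfiniteDegreeSubgraph [Countable V]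
    (h : ∀ (W : Type u) (H : SimpleGraph W), Countable W → NoInfiniteDegreeSubgraph H →
      ∃ π, UnfriendlyPartition H π)
    (hG : NoInfiniteDegreeSubgraph G) : PhantomPartitionable G := by
  intro K
  obtain ⟨A, hA, hA2, hcount⟩ := exists_pairwise_disjoint_colorCount_eq
    (infinite_Ici_inter_preimage_ofNat 2) K
  obtain ⟨σ, hσ⟩ := h _ (ladder G A) inferInstance (noInfiniteDegreeSubgraph_ladder hG hA)
  let π (v : LadderVertex V) : Fin 2 := σ v + -σ (port 2)
  have hπ : PhantomUnfriendly (ladder G A) 0 π :=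
    (hσ.add_const (-σ (port 2))).phantomUnfriendly_zero
  have hzero : π (port 2) = 0 := add_neg_cancel _
  have hport (x : V) : Set.EqOn (π ∘ port) (Fin.ofNat 2) (A x) := fun m hm => by
    simpa only [Function.comp_apply, hzero, zero_add] using hπ.port_eq_port_two_add hA (hA2 x hm)
  refine ⟨π ∘ base, fun x => ?_⟩
  have hdisj : Disjoint (base '' G.neighborSet x) (port '' A x) := by
    rw [Set.disjoint_left, Set.forall_mem_image]
    simp
  have hx := hπ (base x)
  simpa [UnfriendlyColor, neighborSet_ladder_base, colorCount_union hdisj,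
    colorCount_image base_injective, colorCount_image port_injective,
    colorCount_congr (hport x), hcount, add_comm] using hx

end Ladder

theorem stmt4 : List.TFAE
    [ -- (1) every graph with conditions has an ω-unfriendly partition
      ∀ (V : Type u) (G : SimpleGraph V) (C : V → Cardinal.{u} × Cardinal.{u}),
        ∃ π : V → Fin 2, CondMuUnfriendly G C ℵ₀ π,
      -- (2) every graph has an ω-unfriendly partition
      ∀ (V : Type u) (G : SimpleGraph V),
        ∃ π : V → Fin 2, KUnfriendlyPartition G ℵ₀ π,
      -- (3) every countable graph has an unfriendly partition
      ∀ (V : Type u) (G : SimpleGraph V), Countable V →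
        ∃ π : V → Fin 2, UnfriendlyPartition G π,
      -- (4) every countable graph with no nonempty induced subgraph of infinite
      -- minimum degree has an unfriendly partition
      ∀ (V : Type u) (G : SimpleGraph V), Countable V →
        (∀ W : Set V, (∀ x ∈ W, (G.neighborSet x ∩ W).Infinite) → W = ∅) →
        ∃ π : V → Fin 2, UnfriendlyPartition G π ] := by
  tfae_have 1 → 2 := fun h V G => (h V G _).imp fun _ => CondMuUnfriendly.kUnfriendlyPartition
  tfae_have 2 → 3 := fun h V G _ => (h V G).imp fun _ => KUnfriendlyPartition.unfriendlyPartition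
  tfae_have 3 → 4 := fun h V G hV _ => h V G hV
  tfae_have 4 → 1 := by
    intro h V G C
    have hpart : PhantomPartitionable G := phantomPartitionable_of_countable_induce fun S hS =>
      have : Countable S := hS.to_subtype
      phantomPartitionable_of_compl_infiniteDegreePart <|
        phantomPartitionable_of_noInfiniteDegreeSubgraph h
          noInfiniteDegreeSubgraph_induce_compl_infiniteDegreePart
    exact (hpart _).imp fun _ => PhantomUnfriendly.condMuUnfriendly
  tfae_finish
end

section
/- For every graph G=(V,E) there exists a unique partition of V into three pairwise disjoint sets V = V¹ ∪ V² ∪ 𝓘(G) such that each element of V¹ has only finitely many neighbours in V¹ and each element of V² has infinitely many neighbours in V¹. -/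
universe u

/-!
Replace "infinitely many neighbours of `x` lie in `W`" by "`y ∈ W` frequently along `l x`", for a
filter `l x` attached to each point `x`, and let `K` be the largest set `W` with this property at
all of its points. The admissible sets `V¹` are the fixed points of the antitone operator
`F A = {x ∉ K | y ∉ A eventually along l x}`.

At a point of `F A ∆ F B`, one of `A` and `B` is frequent and the other is not, so `A ∆ B` is
frequent. Hence, if `F A ∆ F B = A ∆ B`, this set is contained in `K`; as it is also disjoint from
`K`, it is empty. Applied to two fixed points of `F`, this gives uniqueness; applied to `A` and
`F A`, where `A` is a fixed point of the monotone operator `F ∘ F`, it gives existence.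
-/

open Filter
open scoped symmDiff

section FrequentCore

variable {V : Type u} (l : V → Filter V)

/-- The analogue of `𝓘(G)` for a filter `l x` attached to each point `x`: the largest set `W`
that is frequent along `l x` for every `x ∈ W`. For `l x = 𝓝[≠] x` it is the perfect kernel of a
topological space; for graphs, `l x` is the cofinite filter on the neighbours of `x`. -/
def frequentCore : Set V :=
  ⋃₀ {W : Set V | ∀ x ∈ W, ∃ᶠ y in l x, y ∈ W}

/-- The operator whose fixed points are the sets `V¹`: the points outside the core along whose
filter the set `A` is eventually avoided. -/
def avoiders (A : Set V) : Set V :=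
  {x | x ∉ frequentCore l ∧ ∀ᶠ y in l x, y ∉ A}

variable {l} {A B : Set V}

theorem subset_frequentCore (h : ∀ x ∈ A, ∃ᶠ y in l x, y ∈ A) : A ⊆ frequentCore l :=
  Set.subset_sUnion_of_mem h

theorem antitone_avoiders : Antitone (avoiders l) :=
  fun _ _ hAB _ hx ↦ ⟨hx.1, hx.2.mono fun _ hy hyA ↦ hy (hAB hyA)⟩

theorem frequently_mem_diff_of_mem_avoiders_diff {x : V} (hx : x ∈ avoiders l A \ avoiders l B) :
    ∃ᶠ y in l x, y ∈ B \ A :=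
  have hB : ∃ᶠ y in l x, y ∈ B := fun h ↦ hx.2 ⟨hx.1.1, h⟩
  hB.and_eventually hx.1.2

theorem frequently_mem_symmDiff_of_mem_symmDiff_avoiders {x : V}
    (hx : x ∈ avoiders l A ∆ avoiders l B) : ∃ᶠ y in l x, y ∈ A ∆ B :=
  hx.elim (fun h ↦ (frequently_mem_diff_of_mem_avoiders_diff h).mono fun _ ↦ Or.inr)
    (fun h ↦ (frequently_mem_diff_of_mem_avoiders_diff h).mono fun _ ↦ Or.inl)

theorem eq_of_symmDiff_avoiders_eq (h : avoiders l A ∆ avoiders l B = A ∆ B) : A = B := by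
  have hcore : A ∆ B ⊆ frequentCore l := subset_frequentCore fun x hx ↦
    frequently_mem_symmDiff_of_mem_symmDiff_avoiders (h ▸ hx)
  have hcompl : A ∆ B ⊆ (frequentCore l)ᶜ :=
    h ▸ Set.symmDiff_subset_union.trans (Set.union_subset (fun _ hx ↦ hx.1) fun _ hx ↦ hx.1)
  exact symmDiff_eq_bot.mp (Set.subset_empty_iff.mp fun x hx ↦ hcompl hx (hcore hx))

variable (l)

theorem exists_avoiders_eq_self : ∃ A, avoiders l A = A := by
  let F₂ : Set V →o Set V := ⟨avoiders l ∘ avoiders l, antitone_avoiders.comp antitone_avoiders⟩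
  have hA : avoiders l (avoiders l F₂.lfp) = F₂.lfp := F₂.map_lfp
  exact ⟨F₂.lfp, eq_of_symmDiff_avoiders_eq (by rw [hA, symmDiff_comm])⟩

theorem existsUnique_avoiders_eq_self : ∃! A, avoiders l A = A :=
  existsUnique_of_exists_of_unique (exists_avoiders_eq_self l)
    fun _ _ hA hB ↦ eq_of_symmDiff_avoiders_eq (by rw [hA, hB])

variable {l}

theorem avoiders_eq_self_iff :
    avoiders l A = A ↔ Disjoint A (frequentCore l) ∧ (∀ x ∈ A, ∀ᶠ y in l x, y ∉ A) ∧
      ∀ x ∈ (A ∪ frequentCore l)ᶜ, ∃ᶠ y in l x, y ∈ A := by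
  constructor
  · intro h
    exact ⟨Set.disjoint_left.mpr fun x hx ↦ (h.ge hx).1, fun x hx ↦ (h.ge hx).2,
      fun x hx hev ↦ hx (Or.inl (h.le ⟨fun hxK ↦ hx (Or.inr hxK), hev⟩))⟩
  · rintro ⟨hdisj, hev, hfreq⟩
    refine Set.Subset.antisymm (fun x hx ↦ ?_) fun x hx ↦ ⟨hdisj.notMem_of_mem_left hx, hev x hx⟩
    by_contra hxA
    exact hfreq x (not_or.mpr ⟨hxA, hx.1⟩) hx.2

theorem partition_frequentCore_iff :
    (A ∪ B ∪ frequentCore l = Set.univ ∧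
      Disjoint A B ∧ Disjoint A (frequentCore l) ∧ Disjoint B (frequentCore l) ∧
      (∀ x ∈ A, ∀ᶠ y in l x, y ∉ A) ∧ (∀ x ∈ B, ∃ᶠ y in l x, y ∈ A)) ↔
    avoiders l A = A ∧ B = (A ∪ frequentCore l)ᶜ := by
  have hcompl : B = (A ∪ frequentCore l)ᶜ ↔
      (Disjoint A B ∧ Disjoint B (frequentCore l)) ∧ A ∪ B ∪ frequentCore l = Set.univ := by
    rw [eq_comm, compl_eq_iff_isCompl, isCompl_iff, Set.disjoint_union_left,
      disjoint_comm (a := frequentCore l), Set.union_right_comm]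
    exact and_congr_right' codisjoint_iff
  rw [avoiders_eq_self_iff]
  constructor
  · rintro ⟨hcover, hAB, hAK, hBK, hA, hB⟩
    obtain rfl := hcompl.mpr ⟨⟨hAB, hBK⟩, hcover⟩
    exact ⟨⟨hAK, hA, hB⟩, rfl⟩
  · rintro ⟨⟨hAK, hA, hB⟩, rfl⟩
    obtain ⟨⟨hAB, hBK⟩, hcover⟩ := hcompl.mp rfl
    exact ⟨hcover, hAB, hAK, hBK, hA, hB⟩

end FrequentCore

theorem frequently_mem_cofinite_inf_principal {α : Type*} {s t : Set α} :
    (∃ᶠ y in cofinite ⊓ 𝓟 s, y ∈ t) ↔ (s ∩ t).Infinite := by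
  rw [frequently_inf_principal, frequently_cofinite_iff_infinite]
  rfl

theorem eventually_notMem_cofinite_inf_principal {α : Type*} {s t : Set α} :
    (∀ᶠ y in cofinite ⊓ 𝓟 s, y ∉ t) ↔ (s ∩ t).Finite := by
  rw [← not_frequently, frequently_mem_cofinite_inf_principal, Set.not_infinite]

theorem frequentCore_cofinite_neighborSet {V : Type u} (G : SimpleGraph V) :
    frequentCore (fun x ↦ cofinite ⊓ 𝓟 (G.neighborSet x)) = calI G := by
  simp only [frequentCore, calI, frequently_mem_cofinite_inf_principal]

theorem stmt5_general {V : Type u} (l : V → Filter V) :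
    ∃! p : Set V × Set V,
      p.1 ∪ p.2 ∪ frequentCore l = Set.univ ∧
      Disjoint p.1 p.2 ∧ Disjoint p.1 (frequentCore l) ∧ Disjoint p.2 (frequentCore l) ∧
      (∀ x ∈ p.1, ∀ᶠ y in l x, y ∉ p.1) ∧
      (∀ x ∈ p.2, ∃ᶠ y in l x, y ∈ p.1) := by
  simp only [partition_frequentCore_iff]
  obtain ⟨A, hA, hunique⟩ := existsUnique_avoiders_eq_self l
  refine ⟨(A, (A ∪ frequentCore l)ᶜ), ⟨hA, rfl⟩, ?_⟩
  rintro ⟨A', B'⟩ ⟨hA', hB'⟩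
  obtain rfl := hunique A' hA'
  exact Prod.ext rfl hB'

theorem stmt5 {V : Type u} (G : SimpleGraph V) :
    ∃! p : Set V × Set V,
      p.1 ∪ p.2 ∪ calI G = Set.univ ∧
      Disjoint p.1 p.2 ∧ Disjoint p.1 (calI G) ∧ Disjoint p.2 (calI G) ∧
      (∀ x ∈ p.1, (G.neighborSet x ∩ p.1).Finite) ∧
      (∀ x ∈ p.2, (G.neighborSet x ∩ p.1).Infinite) := by
  simpa only [frequentCore_cofinite_neighborSet, frequently_mem_cofinite_inf_principal,
    eventually_notMem_cofinite_inf_principal] using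
    stmt5_general fun x ↦ cofinite ⊓ 𝓟 (G.neighborSet x)
end

section
/- Let κ be an infinite cardinal and G=(V,E) a graph. Let 𝓔 be the set of pairs (W,π) with W ⊆ V and π : W → {0,1} such that each element of W has at least κ neighbours in W or at least as many neighbours in W as in V−W, and π is a κ-unfriendly partition of the induced subgraph on W. Then for any ordinal μ and any increasing chain (W_α, π_α)_{α<μ} of elements of 𝓔 (meaning W_α ⊆ W_β and π_β restricted to W_α equals π_α for α ≤ β < μ), the pair (∪_{α<μ} W_α, ∪_{α<μ} π_α) belongs to 𝓔. -/
open Cardinal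

universe u

/-- `(W, π)` belongs to the set `𝓔`: each element of `W` has at least `κ` neighbours in `W` or
at least as many neighbours in `W` as in `V − W`, and `π` is a `κ`-unfriendly partition of the
induced subgraph on `W`. -/
def InE {V : Type u} (G : SimpleGraph V) (κ : Cardinal.{u}) (W : Set V) (π : ↥W → Fin 2) :
    Prop :=
  (∀ x ∈ W, κ ≤ #↥(G.neighborSet x ∩ W) ∨
    #↥(G.neighborSet x ∩ Wᶜ) ≤ #↥(G.neighborSet x ∩ W)) ∧
  KUnfriendlyPartition (G.induce W) κ π

/-!
Call a neighbour of `x` a friend or an enemy of `x` according to whether it has the colour of `x`.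
The union `U` of a directed family `W i` inherits the first condition because enlarging a set can
only help it. For the second, suppose that `x ∈ U` has fewer than `κ` enemies in `U`. Then in every
`W i` containing `x` it has at most as many friends as enemies.

* If `x` has finitely many enemies in `U`, say `n`, then any finite set of friends of `x` in `U`
  lies, together with `x`, in a single `W i`, and so has at most `n` elements.
* If `x` has an infinite number `c < κ` of enemies in `U`, then any `W i` containing `x` contains at
  most `c + c = c` neighbours of `x`. As `c < κ`, the first condition on `W i` bounds the number of
  neighbours outside `W i` by `c` as well, so `x` has at most `c` neighbours altogether.
-/

section FriendsAndEnemies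

variable {V : Type u} {C : Type*} (G : SimpleGraph V) (π : V → C)

/-- The neighbours of `x` in `W` having the same colour as `x`. The colouring is defined on all of
`V`, so that the sets belonging to different `W` can be compared; only its values on `W` and at `x`
matter. -/
def friendSet (W : Set V) (x : V) : Set V := {y ∈ W | G.Adj x y ∧ π y = π x}

/-- The neighbours of `x` in `W` having a different colour from `x`, for a colouring of all of `V`
as in `friendSet`. -/
def enemySet (W : Set V) (x : V) : Set V := {y ∈ W | G.Adj x y ∧ π y ≠ π x}

variable {G π} {W W' : Set V} {x : V}

lemma friendSet_subset_neighborSet : friendSet G π W x ⊆ G.neighborSet x :=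
  fun _ hy => hy.2.1

lemma enemySet_mono (h : W ⊆ W') : enemySet G π W x ⊆ enemySet G π W' x :=
  fun _ hy => ⟨h hy.1, hy.2⟩

lemma friendSet_union_enemySet :
    friendSet G π W x ∪ enemySet G π W x = G.neighborSet x ∩ W := by
  ext y
  simp only [friendSet, enemySet, Set.mem_union, Set.mem_ofPred_eq, Set.mem_inter_iff,
    SimpleGraph.mem_neighborSet]
  tauto

lemma mk_friendSet_iUnion_le {ι : Type*} {W : ι → Set V} (hW : Directed (· ⊆ ·) W)
    (hx : x ∈ ⋃ i, W i) {n : ℕ} (hn : ∀ i, x ∈ W i → #(friendSet G π (W i) x) ≤ n) :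
    #(friendSet G π (⋃ i, W i) x) ≤ n := by
  classical
  have : Nonempty ι := (Set.mem_iUnion.1 hx).nonempty
  refine mk_le_iff_forall_finset_subset_card_le.2 fun s hs => ?_
  have hxs : (↑(insert x s) : Set V) ⊆ ⋃ i, W i := by
    rw [Finset.coe_insert]
    exact Set.insert_subset hx fun y hy => (hs hy).1
  obtain ⟨i, hi⟩ := hW.exists_mem_subset_of_finset_subset_biUnion hxs
  rw [Finset.coe_insert, Set.insert_subset_iff] at hi
  exact mk_le_iff_forall_finset_subset_card_le.1 (hn i hi.1) s
    fun y hy => ⟨hi.2 hy, (hs hy).2⟩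

end FriendsAndEnemies

lemma le_mk_inter_or_mk_inter_compl_le_of_subset {V : Type u} {κ : Cardinal.{u}}
    {N W W' : Set V} (hWW' : W ⊆ W') (h : κ ≤ #↥(N ∩ W) ∨ #↥(N ∩ Wᶜ) ≤ #↥(N ∩ W)) :
    κ ≤ #↥(N ∩ W') ∨ #↥(N ∩ W'ᶜ) ≤ #↥(N ∩ W') := by
  have hin : #↥(N ∩ W) ≤ #↥(N ∩ W') := mk_le_mk_of_subset (by gcongr)
  have hout : #↥(N ∩ W'ᶜ) ≤ #↥(N ∩ Wᶜ) := mk_le_mk_of_subset (by gcongr)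
  exact h.imp (·.trans hin) fun h => hout.trans (h.trans hin)

section InE

variable {V : Type u} {G : SimpleGraph V} {κ : Cardinal.{u}} {π : V → Fin 2}

lemma kUnfriendlyPartition_induce_domRestrict_iff {W : Set V} :
    KUnfriendlyPartition (G.induce W) κ (W.domRestrict π) ↔
      ∀ x ∈ W, κ ≤ #(enemySet G π W x) ∨ #(friendSet G π W x) ≤ #(enemySet G π W x) := by
  simp only [friendSet, enemySet, mk_sep]
  exact Subtype.forall

lemma InE.mk_friendSet_le {W : Set V} (h : InE G κ W (W.domRestrict π)) {x : V} (hx : x ∈ W)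
    (hκ : #(enemySet G π W x) < κ) : #(friendSet G π W x) ≤ #(enemySet G π W x) :=
  (kUnfriendlyPartition_induce_domRestrict_iff.1 h.2 x hx).resolve_left hκ.not_ge

lemma InE.mk_neighborSet_le {W : Set V} (h : InE G κ W (W.domRestrict π)) {x : V} (hx : x ∈ W)
    {c : Cardinal.{u}} (hc : ℵ₀ ≤ c) (hcκ : c < κ) (henemy : #(enemySet G π W x) ≤ c) :
    #(G.neighborSet x) ≤ c := by
  have hfriend : #(friendSet G π W x) ≤ c :=
    (h.mk_friendSet_le hx (henemy.trans_lt hcκ)).trans henemy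
  have hin : #↥(G.neighborSet x ∩ W) ≤ c := by
    rw [← friendSet_union_enemySet (π := π)]
    exact (mk_union_le _ _).trans (add_le_of_le hc hfriend henemy)
  have hout : #↥(G.neighborSet x ∩ Wᶜ) ≤ c :=
    ((h.1 x hx).resolve_left (hin.trans_lt hcκ).not_ge).trans hin
  rw [← Set.inter_union_compl (G.neighborSet x) W]
  exact (mk_union_le _ _).trans (add_le_of_le hc hin hout)

lemma kUnfriendlyPartition_induce_iUnion {ι : Type*} {W : ι → Set V}
    (hW : Directed (· ⊆ ·) W) (hE : ∀ i, InE G κ (W i) ((W i).domRestrict π)) :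
    KUnfriendlyPartition (G.induce (⋃ i, W i)) κ ((⋃ i, W i).domRestrict π) := by
  refine kUnfriendlyPartition_induce_domRestrict_iff.2 fun x hx => ?_
  refine (le_or_gt κ _).imp_right fun hκ => ?_
  have henemy (i : ι) : #(enemySet G π (W i) x) ≤ #(enemySet G π (⋃ i, W i) x) :=
    mk_le_mk_of_subset (enemySet_mono (Set.subset_iUnion W i))
  rcases lt_or_ge #(enemySet G π (⋃ i, W i) x) ℵ₀ with hfin | hinf
  · obtain ⟨n, hn⟩ := lt_aleph0.1 hfin
    rw [hn] at hκ henemy ⊢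
    exact mk_friendSet_iUnion_le hW hx fun i hi =>
      ((hE i).mk_friendSet_le hi ((henemy i).trans_lt hκ)).trans (henemy i)
  · obtain ⟨i, hi⟩ := Set.mem_iUnion.1 hx
    exact (mk_le_mk_of_subset friendSet_subset_neighborSet).trans
      ((hE i).mk_neighborSet_le hi hinf hκ (henemy i))

lemma InE.iUnion {ι : Type*} {W : ι → Set V} (hW : Directed (· ⊆ ·) W)
    (hE : ∀ i, InE G κ (W i) ((W i).domRestrict π)) :
    InE G κ (⋃ i, W i) ((⋃ i, W i).domRestrict π) := by
  refine ⟨fun x hx => ?_, kUnfriendlyPartition_induce_iUnion hW hE⟩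
  obtain ⟨i, hi⟩ := Set.mem_iUnion.1 hx
  exact le_mk_inter_or_mk_inter_compl_le_of_subset (Set.subset_iUnion W i) ((hE i).1 x hi)

end InE

theorem stmt7_general {V : Type u} (G : SimpleGraph V) (κ : Cardinal.{u}) {ι : Type*}
    {W : ι → Set V} (hW : Directed (· ⊆ ·) W) {π : ∀ i, ↥(W i) → Fin 2}
    (hE : ∀ i, InE G κ (W i) (π i)) {U : Set V} (hU : U = ⋃ i, W i) (π' : ↥U → Fin 2)
    (hπ' : ∀ (i : ι) (y : ↥U) (hy : ↑y ∈ W i), π' y = π i ⟨y, hy⟩) :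
    InE G κ U π' := by
  subst hU
  obtain ⟨p, rfl⟩ := Subtype.surjective_restrict (β := fun _ => Fin 2) (· ∈ ⋃ i, W i) π'
  have hp (i : ι) : π i = (W i).domRestrict p :=
    funext fun y => (hπ' i ⟨y, Set.mem_iUnion_of_mem i y.2⟩ y.2).symm
  exact InE.iUnion hW fun i => hp i ▸ hE i

theorem stmt7 {V : Type u} (G : SimpleGraph V) (κ : Cardinal.{u}) (hκ : ℵ₀ ≤ κ)
    (μ : Ordinal.{u}) (W : ∀ α : Ordinal.{u}, α < μ → Set V)
    (π : ∀ (α : Ordinal.{u}) (hα : α < μ), ↥(W α hα) → Fin 2)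
    (hmono : ∀ (α : Ordinal.{u}) (hα : α < μ) (β : Ordinal.{u}) (hβ : β < μ),
      α ≤ β → W α hα ⊆ W β hβ)
    (hcompat : ∀ (α : Ordinal.{u}) (hα : α < μ) (β : Ordinal.{u}) (hβ : β < μ), α ≤ β →
      ∀ (x : V) (hxα : x ∈ W α hα) (hxβ : x ∈ W β hβ), π β hβ ⟨x, hxβ⟩ = π α hα ⟨x, hxα⟩)
    (hE : ∀ (α : Ordinal.{u}) (hα : α < μ), InE G κ (W α hα) (π α hα))
    (π' : ↥(⋃ (α : Ordinal.{u}) (hα : α < μ), W α hα) → Fin 2)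
    (hπ' : ∀ (α : Ordinal.{u}) (hα : α < μ)
      (y : ↥(⋃ (α : Ordinal.{u}) (hα : α < μ), W α hα)) (hy : ↑y ∈ W α hα),
      π' y = π α hα ⟨y, hy⟩) :
    InE G κ (⋃ (α : Ordinal.{u}) (hα : α < μ), W α hα) π' :=
  stmt7_general G κ (ι := {α // α < μ}) (W := fun i => W i i.2)
    (Monotone.directed_le fun i j => hmono i i.2 j j.2) (fun i => hE i i.2) iSup_subtype' π'
    fun i => hπ' i i.2
end
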